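/- arXiv:2605.27833 — 2 statements merged into one kernel-verified Lean document; each statement's English description precedes it below -/
import Mathlib

section
/- There exist positive constants λ and c such that the following holds. Let x ≥ 10 and let 𝒫 be a set of primes ≤ x for which there is some v ∈ [1, c√(log x)] with ∑_{p ∈ 𝒫, x^{1/(ev)} < p ≤ x} 1/p ≥ 1 + λ. Then (1/x) · ∑_{n ≤ x, every prime factor of n lies in 𝒫} |μ(n)| ≥ c · v^{−v/c} · ∏_{p ≤ x, p prime, p ∉ 𝒫}(1 − 1/p). -/
/-!
Let `L = log x` and `y = x ^ (1 / (e v))`. The square-free numbers counted are products `a m`, where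
`a` is composed of the primes of `P` up to `y` and `m` of those above `y`. The weight
`∏ (1 + 1 / p)` over the small primes of `P` dominates the sieving product up to a factor
`O(v) / L`, by Mertens' lower bound (`sieve_product_le`), and at least half of it comes from `a ≤ √x`
by Markov's inequality (`half_mass_small`). So it suffices to produce, at every scale
`X = x / a ∈ [√x, x]`, at least `X v ^ (-O(v)) / L` square-free `m ≤ X` composed of primes of `P`
above `y` (`many_products`).

The primes of `P` above `y` are sorted into the cells `⌊log p⌋ = a`. The logarithmic mass is at least
`1 + λ`, so for some `M` the dyadic range `a ∈ [M, 2M)` has mass `≫ M / L`, and since a cell has mass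
`O(1 / M)` by Chebyshev's bound, a proportion `≫ M / L ≫ 1 / v` of the cells in the range contain
`≫ exp a / L` primes of `P` (`exists_dense_block`). Let `A ⊆ [M, 2M)` be the set of these cells. If
the integer `T`, slightly less than `log X`, has many representations as a sum of `k = O(v)` elements
of `A` up to an error `k`, then choosing a prime in each cell gives many `m = p₁ ⋯ pₖ ≤ X`, each
obtained from at most `k ^ k` tuples (`card_products_ge`).

That a dense set has this additive property, with a loss of only a power of the density per summand
(`exists_many_sums`), rests on two facts. By Pollard's theorem modulo a prime `q` (`pollard`), the
residues with many representations as a sum of `j` elements grow linearly in number with `j`, until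
they are all of `ℤ/q` (`popular_all`). And there is a `σ` such that all numbers `s σ + e`, with `e`
in a dense subset of `A`, are sums of `2 s + 1` elements of `A` in many ways
(`exists_popular_progression`). The first fact fixes the residue of the sum modulo `σ`, and the
second its size.
-/

open scoped BigOperators Classical

noncomputable section

/-! ### Pollard's theorem -/

/-- The number of representations `t = a + b` with `a ∈ A`, `b ∈ B`. -/
def sumRep {G : Type*} [AddCommGroup G] (A B : Finset G) (t : G) : ℕ :=
  (A.filter (fun a => t - a ∈ B)).card

lemma sumRep_le_right {G : Type*} [AddCommGroup G] (A B : Finset G) (t : G) :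
    sumRep A B t ≤ B.card := by
  refine Finset.card_le_card_of_injOn (fun a => t - a) ?_ ?_
  · intro a ha
    exact (Finset.mem_filter.1 ha).2
  · intro a _ b _ h
    simpa using h

lemma sum_sumRep {G : Type*} [AddCommGroup G] [Fintype G] (A B : Finset G) :
    ∑ t, sumRep A B t = A.card * B.card := by
  unfold sumRep
  simp_rw [Finset.card_filter]
  rw [Finset.sum_comm]
  have : ∀ a ∈ A, ∑ t : G, (if t - a ∈ B then 1 else 0) = B.card := by
    intro a _
    rw [← Finset.card_filter]
    refine Finset.card_bij (fun t _ => t - a) ?_ ?_ ?_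
    · intro t ht; simpa using ht
    · intro t _ u _ h; simpa using h
    · intro b hb; exact ⟨b + a, by simpa using hb, by simp⟩
  rw [Finset.sum_congr rfl this]
  simp

lemma sumRep_eq_sum {G : Type*} [AddCommGroup G] [Fintype G] (A B : Finset G) (t : G) :
    (sumRep A B t : ℤ) = ∑ a : G, (if a ∈ A then 1 else 0) * (if t - a ∈ B then 1 else 0) := by
  unfold sumRep
  rw [Finset.card_filter]
  push_cast
  rw [← Finset.sum_subset (Finset.subset_univ A)]
  · exact Finset.sum_congr rfl fun a ha => by simp [ha]
  · intro a _ ha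
    simp [ha]

lemma sumRep_comm {G : Type*} [AddCommGroup G] [Fintype G] (A B : Finset G) (t : G) :
    sumRep A B t = sumRep B A t := by
  have : (sumRep A B t : ℤ) = sumRep B A t := by
    rw [sumRep_eq_sum, sumRep_eq_sum]
    refine Fintype.sum_equiv (Equiv.subLeft t) _ _ ?_
    intro a
    simp [mul_comm]
  exact_mod_cast this

/-- The identity `1_A * 1_B = 1_{A ∪ B} * 1_{A ∩ B} + 1_{A \ B} * 1_{B \ A}` for convolutions. -/
lemma sumRep_transform {G : Type*} [AddCommGroup G] [Fintype G] [DecidableEq G] (A B : Finset G) (t : G) :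
    sumRep A B t = sumRep (A ∪ B) (A ∩ B) t + sumRep (A \ B) (B \ A) t := by
  have h1 := sumRep_comm B (A ∩ B) t
  have : (sumRep A B t : ℤ) + sumRep B (A ∩ B) t = sumRep (A ∪ B) (A ∩ B) t +
      sumRep (A \ B) (B \ A) t + sumRep (A ∩ B) B t := by
    simp only [sumRep_eq_sum, ← Finset.sum_add_distrib]
    apply Finset.sum_congr rfl
    intro a _
    by_cases h1 : a ∈ A <;> by_cases h2 : a ∈ B <;> by_cases h3 : t - a ∈ A <;>
      by_cases h4 : t - a ∈ B <;> simp [h1, h2, h3, h4]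
  rw [h1] at this
  have h2 : (sumRep A B t : ℤ) = sumRep (A ∪ B) (A ∩ B) t + sumRep (A \ B) (B \ A) t := by
    linarith
  exact_mod_cast h2

/-- In `ℤ/q`, `q` prime, some translate of `B` meets a proper subset `A` without lying in it. -/
lemma exists_translate_inter {q : ℕ} [Fact q.Prime] (A B : Finset (ZMod q)) (hA : A.Nonempty)
    (hA' : A ≠ Finset.univ) (hB : 1 < B.card) :
    ∃ e : ZMod q, (∃ b ∈ B, b + e ∈ A) ∧ ∃ b ∈ B, b + e ∉ A := by
  by_contra! hcon
  obtain ⟨b₁, hb₁, b₂, hb₂, hne⟩ := Finset.one_lt_card.1 hB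
  have step : ∀ a ∈ A, a + (b₂ - b₁) ∈ A := by
    intro a ha
    have := hcon (a - b₁) ⟨b₁, hb₁, by simpa using ha⟩ b₂ hb₂
    convert this using 1
    ring
  obtain ⟨a, ha⟩ := hA
  have hn : ∀ n : ℕ, a + n * (b₂ - b₁) ∈ A := by
    intro n
    induction n with
    | zero => simpa using ha
    | succ n ih =>
      have := step _ ih
      convert this using 1
      push_cast
      ring
  apply hA'
  rw [Finset.eq_univ_iff_forall]
  intro x
  have hd : b₂ - b₁ ≠ 0 := sub_ne_zero.2 hne.symm
  have := hn ((x - a) / (b₂ - b₁)).val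
  rw [ZMod.natCast_zmod_val, div_mul_cancel₀ _ hd] at this
  simpa using this

/-- **Pollard's theorem**: a version of the Cauchy–Davenport inequality that counts the elements
of `A + B` with multiplicity up to `s`. The proof is by induction on `|B|`, using Dyson's
`e`-transform: after a translation of `B`, the pair `(A, B)` is replaced by `(A ∪ B, A ∩ B)`, which
has the same total size and a smaller second member. If `|A ∩ B| < s`, the missing multiplicity
`s - |A ∩ B|` is found in the sums of `A \ B` and `B \ A`. -/
theorem pollard {q : ℕ} [Fact q.Prime] : ∀ (n s : ℕ) (A B : Finset (ZMod q)), B.card = n →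
    s ≤ A.card → s ≤ B.card →
    s * min q (A.card + B.card - s) ≤ ∑ t, min s (sumRep A B t) := by
  intro n
  induction n using Nat.strong_induction_on with
  | _ n ih =>
  intro s A B hBn hsA hsB
  have hcardq : Fintype.card (ZMod q) = q := ZMod.card q
  rcases Nat.eq_zero_or_pos s with rfl | hs
  · simp
  rcases hsB.eq_or_lt with hsB' | hsB'
  · have : ∀ t, min s (sumRep A B t) = sumRep A B t := fun t =>
      min_eq_right (hsB' ▸ sumRep_le_right A B t)
    simp_rw [this, sum_sumRep, ← hsB']
    rw [mul_comm A.card]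
    apply Nat.mul_le_mul_left
    apply (min_le_right _ _).trans
    omega
  by_cases hA' : A = Finset.univ
  · have : ∀ t, min s (sumRep A B t) = s := by
      intro t
      apply min_eq_left
      rw [sumRep_comm]
      unfold sumRep
      rw [hA']
      simpa using hsB
    simp_rw [this]
    simp only [Finset.sum_const, Finset.card_univ, hcardq, smul_eq_mul]
    rw [mul_comm q]
    exact Nat.mul_le_mul_left _ (min_le_left _ _)
  have hAne : A.Nonempty := Finset.card_pos.1 (by omega)
  obtain ⟨e, ⟨b, hb, hbe⟩, ⟨b', hb', hbe'⟩⟩ := exists_translate_inter A B hAne hA' (by omega)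
  set B' := B.map (Equiv.addRight e).toEmbedding with hB'
  have hmem : ∀ x, x ∈ B' ↔ x - e ∈ B := by
    intro x
    simp only [hB', Finset.mem_map_equiv]
    simp [sub_eq_add_neg]
  have hB'card : B'.card = B.card := Finset.card_map _
  have htr : ∑ t, min s (sumRep A B t) = ∑ t, min s (sumRep A B' t) := by
    refine Fintype.sum_equiv (Equiv.addRight e) _ _ ?_
    intro t
    congr 1
    unfold sumRep
    congr 1
    ext a
    simp only [Finset.mem_filter, hmem, Equiv.coe_addRight]
    rw [show t + e - a - e = t - a by ring]
  rw [htr]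
  have hUI : (A ∪ B').card + (A ∩ B').card = A.card + B'.card := Finset.card_union_add_card_inter _ _
  have hIpos : 0 < (A ∩ B').card :=
    Finset.card_pos.2 ⟨b + e, Finset.mem_inter.2 ⟨hbe, (hmem _).2 (by simpa using hb)⟩⟩
  have hIlt : (A ∩ B').card < B'.card := by
    apply Finset.card_lt_card
    refine ⟨Finset.inter_subset_right, fun h => hbe' ?_⟩
    exact (Finset.mem_inter.1 (h ((hmem _).2 (by simpa using hb')))).1
  -- if `A ∩ B'` is large, the transformed pair suffices
  by_cases hI : s ≤ (A ∩ B').card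
  · have h := ih _ (by omega) s (A ∪ B') (A ∩ B') rfl
      (hI.trans (Finset.card_le_card (Finset.inter_subset_union))) hI
    rw [hUI, hB'card] at h
    refine h.trans (Finset.sum_le_sum fun t _ => ?_)
    apply min_le_min_left
    rw [sumRep_transform A B']
    omega
  · push Not at hI
    -- otherwise all sums of `A ∪ B'` and `A ∩ B'` count, and the differences supply the rest
    set i := (A ∩ B').card with hi
    have hAd : (A \ B').card + i = A.card := Finset.card_sdiff_add_card_inter _ _
    have hBd : (B' \ A).card + i = B'.card := by
      rw [hi, Finset.inter_comm]
      exact Finset.card_sdiff_add_card_inter _ _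
    have h := ih _ (by omega) (s - i) (A \ B') (B' \ A) rfl (by omega) (by omega)
    have h2 : ∑ t, min i (sumRep (A ∪ B') (A ∩ B') t) = (A ∪ B').card * i := by
      rw [hi, ← sum_sumRep]
      exact Finset.sum_congr rfl fun t _ => min_eq_right (sumRep_le_right _ _ t)
    have h3 : (A ∪ B').card * i + (s - i) * min q ((A \ B').card + (B' \ A).card - (s - i))
        ≤ ∑ t, min s (sumRep A B' t) := by
      rw [← h2]
      refine (Nat.add_le_add_left h _).trans ?_
      rw [← Finset.sum_add_distrib]
      apply Finset.sum_le_sum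
      intro t _
      rw [sumRep_transform A B']
      omega
    refine le_trans ?_ h3
    have hUq : (A ∪ B').card ≤ q := by
      exact (Finset.card_le_univ _).trans_eq hcardq
    obtain ⟨u, hu⟩ : ∃ u, s = i + u := ⟨s - i, by omega⟩
    obtain ⟨a', ha'⟩ : ∃ a', (A \ B').card = u + a' := ⟨(A \ B').card - u, by omega⟩
    obtain ⟨c', hc'⟩ : ∃ c', (B' \ A).card = u + c' := ⟨(B' \ A).card - u, by omega⟩
    have e1 : (A \ B').card + (B' \ A).card - (s - i) = u + a' + c' := by omega
    have e2 : A.card + B.card - s = u + a' + c' + i := by omega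
    have e3 : (A ∪ B').card = 2 * u + a' + c' + i := by omega
    have e4 : s - i = u := by omega
    rw [e1, e2, e3, e4]
    have e5 : min q (u + a' + c') = u + a' + c' := min_eq_right (by omega)
    rw [e5]
    refine (Nat.mul_le_mul_left _ (min_le_right _ _)).trans ?_
    rw [hu]
    apply le_of_eq
    ring

/-! ### Popular sums -/

/-- The `k`-tuples of elements of `A` whose images under `g` sum to `t`. -/
def tupleRep {G : Type*} [AddCommGroup G] (A : Finset ℕ) (g : ℕ → G) (k : ℕ) (t : G) :
    Finset (Fin k → ℕ) :=
  (Fintype.piFinset (fun _ : Fin k => A)).filter (fun f => ∑ i, g (f i) = t)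

lemma mem_tupleRep {G : Type*} [AddCommGroup G] {A : Finset ℕ} {g : ℕ → G} {k : ℕ} {t : G}
    {f : Fin k → ℕ} : f ∈ tupleRep A g k t ↔ (∀ i, f i ∈ A) ∧ ∑ i, g (f i) = t := by
  simp [tupleRep]

lemma card_tupleRep_succ {G : Type*} [AddCommGroup G] (A : Finset ℕ) (g : ℕ → G) (k : ℕ) (t : G) :
    (tupleRep A g (k + 1) t).card = ∑ a ∈ A, (tupleRep A g k (t - g a)).card := by
  rw [Finset.card_eq_sum_card_fiberwise (f := fun f => f 0) (t := A)]
  · apply Finset.sum_congr rfl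
    intro a ha
    refine Finset.card_nbij' (fun f => Fin.tail f) (fun f => Fin.cons a f) ?_ ?_ ?_ ?_
    · intro f hf
      simp only [Finset.coe_filter, Set.mem_ofPred_eq, mem_tupleRep, Fin.sum_univ_succ] at hf
      simp only [Finset.mem_coe, mem_tupleRep, Fin.tail]
      refine ⟨fun i => hf.1.1 _, ?_⟩
      rw [← hf.1.2, hf.2]
      abel
    · intro f hf
      simp only [Finset.mem_coe, mem_tupleRep] at hf
      simp only [Finset.coe_filter, Set.mem_ofPred_eq, mem_tupleRep, Fin.sum_univ_succ,
        Fin.cons_zero, Fin.cons_succ, and_true, hf.2, add_sub_cancel]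
      intro i
      refine Fin.cases ?_ (fun i => ?_) i
      · simpa using ha
      · simpa using hf.1 i
    · intro f hf
      simp only [Finset.coe_filter, Set.mem_ofPred_eq] at hf
      rw [← hf.2]
      exact Fin.cons_self_tail f
    · intro f _
      exact Fin.tail_cons _ _
  · intro f hf
    exact (mem_tupleRep.1 hf).1 0

/-- Adding one more summand from `A`: a residue which has at least `τ` representations as
`g a + b` with `b` in a set of `k`-fold sums of multiplicity at least `c` is a `(k+1)`-fold sum of
multiplicity at least `τ c`. -/
lemma tupleRep_step {G : Type*} [AddCommGroup G] [DecidableEq G] (A : Finset ℕ) (g : ℕ → G)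
    (hg : Set.InjOn g A) (B : Finset G) (k : ℕ) (c : ℝ) (hB : ∀ t ∈ B, c ≤ (tupleRep A g k t).card)
    (t : G) : (sumRep (A.image g) B t : ℝ) * c ≤ (tupleRep A g (k + 1) t).card := by
  rw [card_tupleRep_succ]
  have h1 : sumRep (A.image g) B t = (A.filter (fun a => t - g a ∈ B)).card := by
    unfold sumRep
    rw [← Finset.card_image_of_injOn (s := A.filter (fun a => t - g a ∈ B)) (f := g)
      (hg.mono (Finset.coe_subset.2 (Finset.filter_subset _ _)))]
    congr 1
    ext x
    simp only [Finset.mem_filter, Finset.mem_image]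
    constructor
    · rintro ⟨⟨a, ha, rfl⟩, h⟩
      exact ⟨a, ⟨ha, h⟩, rfl⟩
    · rintro ⟨a, ⟨ha, h⟩, rfl⟩
      exact ⟨⟨a, ha, rfl⟩, h⟩
  rw [h1]
  push_cast
  calc ((A.filter (fun a => t - g a ∈ B)).card : ℝ) * c
      = ∑ a ∈ A.filter (fun a => t - g a ∈ B), c := by simp
    _ ≤ ∑ a ∈ A.filter (fun a => t - g a ∈ B), ((tupleRep A g k (t - g a)).card : ℝ) :=
        Finset.sum_le_sum fun a ha => hB _ (Finset.mem_filter.1 ha).2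
    _ ≤ _ := Finset.sum_le_sum_of_subset_of_nonneg (Finset.filter_subset _ _)
        (fun _ _ _ => by positivity)

/-- The set of popular `(j + 1)`-fold sums grows linearly in `j`. Here popular means
multiplicity at least `τ ^ j`, with `τ = s ^ 2 / q`: by Pollard's theorem the truncated
multiplicities have a large sum, to which the residues with fewer than `τ` representations
contribute at most `q τ = s ^ 2`. -/
lemma popular_growth {q : ℕ} [Fact q.Prime] (A : Finset ℕ) (g : ℕ → ZMod q) (hg : Set.InjOn g A)
    (s : ℕ) (hs : 1 ≤ s) (h4 : 4 * s ≤ A.card) (j : ℕ) :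
    ∃ B : Finset (ZMod q), min (q - s) (2 * s * (j + 1)) ≤ B.card ∧
      ∀ t ∈ B, ((s : ℝ) ^ 2 / q) ^ j ≤ (tupleRep A g (j + 1) t).card := by
  have hcard : (A.image g).card = A.card := Finset.card_image_of_injOn hg
  have hq0 : (0 : ℝ) < q := by exact_mod_cast (Fact.out : q.Prime).pos
  have hAq : A.card ≤ q := by
    rw [← hcard]
    exact (Finset.card_le_univ _).trans_eq (ZMod.card q)
  induction j with
  | zero =>
    refine ⟨A.image g, ?_, ?_⟩
    · rw [hcard]; omega
    · intro t ht
      obtain ⟨a, ha, rfl⟩ := Finset.mem_image.1 ht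
      simp only [pow_zero, Nat.one_le_cast]
      apply Finset.card_pos.2
      exact ⟨fun _ => a, mem_tupleRep.2 ⟨fun _ => ha, by simp⟩⟩
  | succ j ih =>
    obtain ⟨B, hB, hpop⟩ := ih
    have hsB : s ≤ B.card := by
      refine le_trans (le_min (by omega) ?_) hB
      nlinarith
    have hP := pollard _ s (A.image g) B rfl (by omega) hsB
    set τ : ℝ := (s : ℝ) ^ 2 / q with hτ
    have hτ0 : 0 ≤ τ := by positivity
    set B' : Finset (ZMod q) := Finset.univ.filter (fun t => τ ≤ sumRep (A.image g) B t) with hB'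
    refine ⟨B', ?_, ?_⟩
    · have h1 : ((∑ t, min s (sumRep (A.image g) B t) : ℕ) : ℝ) ≤ s * B'.card + s ^ 2 := by
        push_cast
        have h2 : ∀ t : ZMod q, min (s : ℝ) (sumRep (A.image g) B t) ≤
            (if t ∈ B' then (s : ℝ) else 0) + τ := by
          intro t
          split_ifs with h
          · exact (min_le_left _ _).trans (by linarith)
          · refine (min_le_right _ _).trans ?_
            simp only [hB', Finset.mem_filter, Finset.mem_univ, true_and, not_le] at h
            linarith
        refine (Finset.sum_le_sum fun t _ => h2 t).trans ?_
        rw [Finset.sum_add_distrib, ← Finset.sum_filter]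
        simp only [Finset.filter_univ_mem, Finset.sum_const, nsmul_eq_mul, Finset.card_univ,
          ZMod.card]
        rw [hτ, mul_div_cancel₀ _ hq0.ne', mul_comm]
      have h3 : s * min q ((A.image g).card + B.card - s) ≤ s * (B'.card + s) := by
        refine hP.trans ?_
        have : ((∑ t, min s (sumRep (A.image g) B t) : ℕ) : ℝ) ≤ ((s * (B'.card + s) : ℕ) : ℝ) := by
          refine h1.trans (le_of_eq ?_)
          push_cast; ring
        exact_mod_cast this
      have h4' := Nat.le_of_mul_le_mul_left h3 hs
      rw [hcard] at h4'
      have h5 : 2 * s * (j + 1 + 1) = 2 * s * (j + 1) + 2 * s := by ring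
      rw [h5]
      omega
    · intro t ht
      have ht' : τ ≤ sumRep (A.image g) B t := (Finset.mem_filter.1 ht).2
      refine le_trans ?_ (tupleRep_step A g hg B (j + 1) _ hpop t)
      rw [pow_succ, mul_comm]
      exact mul_le_mul_of_nonneg_right ht' (by positivity)

/-- If `q ≤ 2 s J`, every residue class is a popular sum of `J + 1` elements: the popular sums of
`J` elements miss at most `s` residues, so that every residue is reached from them in at least
`|A| - s ≥ s` ways. -/
lemma popular_all {q : ℕ} [Fact q.Prime] (A : Finset ℕ) (g : ℕ → ZMod q) (hg : Set.InjOn g A)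
    (s : ℕ) (hs : 1 ≤ s) (h4 : 4 * s ≤ A.card) (J : ℕ) (hJ : q ≤ 2 * s * J) (t : ZMod q) :
    ((s : ℝ) ^ 2 / q) ^ J ≤ (tupleRep A g (J + 1) t).card := by
  have hcard : (A.image g).card = A.card := Finset.card_image_of_injOn hg
  have hqpos : 0 < q := (Fact.out : q.Prime).pos
  have hq0 : (0 : ℝ) < q := by exact_mod_cast hqpos
  obtain ⟨j, rfl⟩ : ∃ j, J = j + 1 := by
    rcases J with _ | j
    · simp at hJ; omega
    · exact ⟨j, rfl⟩
  obtain ⟨B, hB, hpop⟩ := popular_growth A g hg s hs h4 j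
  have hAq : A.card ≤ q := by
    rw [← hcard]
    exact (Finset.card_le_univ _).trans_eq (ZMod.card q)
  have hB' : q ≤ B.card + s := by omega
  refine le_trans ?_ (tupleRep_step A g hg B (j + 1) _ hpop t)
  rw [pow_succ, mul_comm]
  gcongr
  have h1 : s ≤ sumRep (A.image g) B t := by
    have h2 : (A.image g).card ≤ sumRep (A.image g) B t + Bᶜ.card := by
      rw [← Finset.card_filter_add_card_filter_not (s := A.image g) (fun a => t - a ∈ B)]
      refine Nat.add_le_add (le_of_eq (by unfold sumRep; congr)) ?_
      refine Finset.card_le_card_of_injOn (fun a => t - a) ?_ ?_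
      · intro a ha
        simpa using (Finset.mem_filter.1 ha).2
      · intro a _ b _ h
        simpa using h
    rw [Finset.card_compl, ZMod.card, hcard] at h2
    omega
  have h2 : (s : ℝ) ^ 2 / q ≤ s := by
    rw [div_le_iff₀ hq0, sq]
    have : (s : ℝ) ≤ q := by exact_mod_cast (by omega : s ≤ q)
    gcongr
  exact h2.trans (by exact_mod_cast h1)

/-- There are a sum `σ` and a set `E` such that every `s σ + e`, `e ∈ E`, is a popular sum of
`1 + 2 s` elements of `A`, uniformly in `s`. The set `E` consists of `e` with `σ - e ∈ A` for which
`e + (σ - e')` is a popular sum for most `e'`; replacing `e` by such an `e'` costs one popular pair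
of sum `σ + e - e'`. -/
lemma exists_popular_progression (M : ℕ) (A : Finset ℕ) (hA : A ⊆ Finset.Ico M (2 * M))
    (hAne : A.Nonempty) :
    ∃ σ : ℕ, 2 * M ≤ σ ∧ σ < 4 * M ∧ ∃ E ⊆ A, (A.card : ℝ) ^ 2 / (4 * M) ≤ E.card ∧
      ∀ s : ℕ, ∀ e ∈ E, ((A.card : ℝ) ^ 6 / (512 * M ^ 4)) ^ s ≤
        (tupleRep A (fun a => (a : ℤ)) (2 * s + 1) (s * σ + e)).card := by
  have hAmem : ∀ a ∈ A, M ≤ a ∧ a < 2 * M := fun a ha => Finset.mem_Ico.1 (hA ha)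
  have hM : 0 < M := by
    obtain ⟨a, ha⟩ := hAne
    have := hAmem a ha
    omega
  have hMr : (0 : ℝ) < M := by exact_mod_cast hM
  set r : ℕ → ℕ := fun y => ((A ×ˢ A).filter (fun p => p.1 + p.2 = y)).card with hr
  have hmaps : ∀ p ∈ A ×ˢ A, p.1 + p.2 ∈ Finset.Ico (2 * M) (4 * M) := by
    intro p hp
    have h1 := hAmem _ (Finset.mem_product.1 hp).1
    have h2 := hAmem _ (Finset.mem_product.1 hp).2
    rw [Finset.mem_Ico]; omega
  have hcardI : (Finset.Ico (2 * M) (4 * M)).card = 2 * M := by simp; omega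
  have hrsum : ∑ y ∈ Finset.Ico (2 * M) (4 * M), r y = A.card ^ 2 := by
    rw [sq, ← Finset.card_product, Finset.card_eq_sum_card_fiberwise hmaps]
  obtain ⟨σ, hσ, hσr⟩ : ∃ σ ∈ Finset.Ico (2 * M) (4 * M), (A.card : ℝ) ^ 2 / (2 * M) ≤ r σ := by
    apply Finset.exists_le_of_sum_le
    · rw [← Finset.card_pos, hcardI]; omega
    · rw [Finset.sum_const, hcardI, nsmul_eq_mul]
      have : ((∑ y ∈ Finset.Ico (2 * M) (4 * M), r y : ℕ) : ℝ) = (A.card : ℝ) ^ 2 := by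
        rw [hrsum]; push_cast; ring
      push_cast at this ⊢
      rw [this, mul_div_cancel₀]
      positivity
  rw [Finset.mem_Ico] at hσ
  refine ⟨σ, hσ.1, hσ.2, ?_⟩
  set E' := A.filter (fun a => a ≤ σ ∧ σ - a ∈ A) with hE'
  have hE'mem : ∀ a, a ∈ E' ↔ a ∈ A ∧ a ≤ σ ∧ σ - a ∈ A := by
    intro a; rw [hE', Finset.mem_filter]
  have hrE : r σ = E'.card := by
    refine Finset.card_bij (fun p _ => p.1) ?_ ?_ ?_
    · intro p hp
      rw [Finset.mem_filter, Finset.mem_product] at hp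
      rw [hE'mem]
      refine ⟨hp.1.1, by omega, ?_⟩
      rw [show σ - p.1 = p.2 by omega]
      exact hp.1.2
    · intro p hp p' hp' h
      rw [Finset.mem_filter] at hp hp'
      ext
      · exact h
      · omega
    · intro a ha
      rw [hE'mem] at ha
      refine ⟨(a, σ - a), ?_, rfl⟩
      rw [Finset.mem_filter, Finset.mem_product]
      exact ⟨⟨ha.1, ha.2.2⟩, by dsimp only; omega⟩
  set m : ℝ := (E'.card : ℝ) with hm
  have hmge : (A.card : ℝ) ^ 2 / (2 * M) ≤ m := by rw [hm, ← hrE]; exact hσr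
  have hmpos : 0 < m := by
    refine lt_of_lt_of_le ?_ hmge
    have : (0 : ℝ) < A.card := by exact_mod_cast Finset.card_pos.2 hAne
    positivity
  set κ : ℝ := m ^ 2 / (16 * M) with hκ
  have hκ0 : 0 < κ := by positivity
  -- pairs with an unpopular sum
  set bad : ℕ → Finset ℕ := fun e => E'.filter (fun e' => (r (e + (σ - e')) : ℝ) < κ) with hbad
  have hbadsum : ((∑ e ∈ E', (bad e).card : ℕ) : ℝ) ≤ m ^ 2 / 8 := by
    have h1 : ∑ e ∈ E', (bad e).card ≤
        ((A ×ˢ A).filter (fun p => (r (p.1 + p.2) : ℝ) < κ)).card := by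
      rw [← Finset.card_sigma]
      refine Finset.card_le_card_of_injOn (fun x => (x.1, σ - x.2)) ?_ ?_
      · intro x hx
        rw [Finset.mem_coe, Finset.mem_sigma] at hx
        simp only [hbad, Finset.mem_filter, hE'mem] at hx
        rw [Finset.mem_coe, Finset.mem_filter, Finset.mem_product]
        exact ⟨⟨hx.1.1, hx.2.1.2.2⟩, hx.2.2⟩
      · intro x hx y hy h
        rw [Finset.mem_coe, Finset.mem_sigma] at hx hy
        simp only [hbad, Finset.mem_filter, hE'mem] at hx hy
        simp only [Prod.mk.injEq] at h
        obtain ⟨x1, x2⟩ := x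
        obtain ⟨y1, y2⟩ := y
        simp only at hx hy h
        obtain ⟨h1, h2⟩ := h
        subst h1
        have : x2 = y2 := by omega
        rw [this]
    have h2 : (((A ×ˢ A).filter (fun p => (r (p.1 + p.2) : ℝ) < κ)).card : ℝ) ≤ 2 * M * κ := by
      rw [Finset.card_eq_sum_card_fiberwise (f := fun p => p.1 + p.2)
        (t := Finset.Ico (2 * M) (4 * M))]
      · push_cast
        have : ∀ y ∈ Finset.Ico (2 * M) (4 * M),
            ((((A ×ˢ A).filter (fun p => (r (p.1 + p.2) : ℝ) < κ)).filter
              (fun p => p.1 + p.2 = y)).card : ℝ) ≤ κ := by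
          intro y _
          by_cases hy : (r y : ℝ) < κ
          · refine le_trans ?_ hy.le
            exact_mod_cast Finset.card_le_card
              (Finset.filter_subset_filter _ (Finset.filter_subset _ _))
          · rw [Finset.filter_filter, Finset.filter_false_of_mem]
            · simpa using hκ0.le
            · rintro p _ ⟨h1, rfl⟩
              exact hy h1
        refine (Finset.sum_le_sum this).trans (le_of_eq ?_)
        rw [Finset.sum_const, hcardI, nsmul_eq_mul]
        push_cast; ring
      · intro p hp
        exact hmaps p (Finset.mem_filter.1 hp).1
    have h3 : 2 * (M : ℝ) * κ = m ^ 2 / 8 := by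
      rw [hκ]; field_simp; norm_num
    rw [← h3]
    exact le_trans (by exact_mod_cast h1) h2
  set E := E'.filter (fun e => ((bad e).card : ℝ) ≤ m / 4) with hE
  have hEE' : E ⊆ E' := Finset.filter_subset _ _
  have hEcard : m / 2 ≤ E.card := by
    have h1 : ((E'.filter (fun e => ¬ ((bad e).card : ℝ) ≤ m / 4)).card : ℝ) * (m / 4)
        ≤ m ^ 2 / 8 := by
      refine le_trans ?_ hbadsum
      push_cast
      calc ((E'.filter (fun e => ¬ ((bad e).card : ℝ) ≤ m / 4)).card : ℝ) * (m / 4)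
          = ∑ e ∈ E'.filter (fun e => ¬ ((bad e).card : ℝ) ≤ m / 4), (m / 4) := by simp
        _ ≤ ∑ e ∈ E'.filter (fun e => ¬ ((bad e).card : ℝ) ≤ m / 4), ((bad e).card : ℝ) :=
            Finset.sum_le_sum fun e he => (not_le.1 (Finset.mem_filter.1 he).2).le
        _ ≤ _ := Finset.sum_le_sum_of_subset_of_nonneg (Finset.filter_subset _ _)
            (fun _ _ _ => by positivity)
    have h2 : (E.card : ℝ) + (E'.filter (fun e => ¬ ((bad e).card : ℝ) ≤ m / 4)).card = m := by
      rw [hm, hE]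
      exact_mod_cast Finset.card_filter_add_card_filter_not (s := E') _
    nlinarith
  refine ⟨E, hEE'.trans (Finset.filter_subset _ _), ?_, ?_⟩
  · refine le_trans (le_of_eq ?_) ((div_le_div_of_nonneg_right hmge (by norm_num)).trans hEcard)
    field_simp
    norm_num
  intro s
  set ω : ℝ := (A.card : ℝ) ^ 6 / (512 * M ^ 4) with hω
  have hω0 : 0 ≤ ω := by positivity
  have hωle : ω ≤ m / 4 * κ := by
    have h1 : ((A.card : ℝ) ^ 2 / (2 * M)) ^ 3 ≤ m ^ 3 := by gcongr
    have h2 : ω = ((A.card : ℝ) ^ 2 / (2 * M)) ^ 3 / (64 * M) := by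
      rw [hω]; field_simp; norm_num
    have h3 : m / 4 * κ = m ^ 3 / (64 * M) := by
      rw [hκ]; field_simp; norm_num
    rw [h2, h3]
    gcongr
  induction s with
  | zero =>
    intro e he
    simp only [pow_zero, Nat.one_le_cast]
    apply Finset.card_pos.2
    refine ⟨fun _ => e, mem_tupleRep.2 ⟨fun _ => ((hE'mem e).1 (hEE' he)).1, ?_⟩⟩
    simp
  | succ s ih =>
    intro e he
    set F : ℤ → ℝ := fun t => ((tupleRep A (fun a => (a : ℤ)) (2 * s + 1) t).card : ℝ) with hF
    have hF0 : ∀ t, 0 ≤ F t := fun t => by positivity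
    have h1 : ((tupleRep A (fun a => (a : ℤ)) (2 * (s + 1) + 1) ((s + 1 : ℕ) * σ + e)).card : ℝ)
        = ∑ p ∈ A ×ˢ A, F ((s + 1 : ℕ) * σ + e - p.1 - p.2) := by
      rw [show 2 * (s + 1) + 1 = 2 * s + 1 + 1 + 1 by ring, card_tupleRep_succ]
      rw [Finset.sum_product, Nat.cast_sum]
      refine Finset.sum_congr rfl fun a _ => ?_
      rw [card_tupleRep_succ, Nat.cast_sum]
    rw [h1]
    set good := E.filter (fun e' => e' ∉ bad e) with hgood
    have hgoodcard : m / 4 ≤ good.card := by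
      have h2 : E.card ≤ good.card + (bad e).card := by
        rw [← Finset.card_filter_add_card_filter_not (s := E) (fun e' => e' ∉ bad e)]
        apply Nat.add_le_add_left
        apply Finset.card_le_card
        intro x hx
        simpa using (Finset.mem_filter.1 hx).2
      have h3 : ((bad e).card : ℝ) ≤ m / 4 := (Finset.mem_filter.1 he).2
      have h4 : (E.card : ℝ) ≤ good.card + (bad e).card := by exact_mod_cast h2
      linarith
    have h2 : ∑ e' ∈ good, ∑ p ∈ (A ×ˢ A).filter (fun p => p.1 + p.2 = e + (σ - e')),
        F (s * σ + e') ≤ ∑ p ∈ A ×ˢ A, F ((s + 1 : ℕ) * σ + e - p.1 - p.2) := by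
      simp_rw [Finset.sum_filter]
      rw [Finset.sum_comm]
      apply Finset.sum_le_sum
      intro p hp
      rw [← Finset.sum_filter]
      have hval : ∀ e' ∈ good.filter (fun e' => p.1 + p.2 = e + (σ - e')),
          F (s * σ + e') = F ((s + 1 : ℕ) * σ + e - p.1 - p.2) := by
        intro e' he'
        rw [Finset.mem_filter] at he'
        have he1 := ((hE'mem e').1 (hEE' (Finset.mem_filter.1 he'.1).1)).2.1
        congr 1
        have : ((p.1 + p.2 : ℕ) : ℤ) = ((e + (σ - e') : ℕ) : ℤ) := by rw [he'.2]
        push_cast [Nat.cast_sub he1] at this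
        push_cast
        linarith
      rw [Finset.sum_congr rfl hval, Finset.sum_const, nsmul_eq_mul]
      have hle1 : (good.filter (fun e' => p.1 + p.2 = e + (σ - e'))).card ≤ 1 := by
        rw [Finset.card_le_one]
        intro x hx y hy
        rw [Finset.mem_filter] at hx hy
        have hx1 := ((hE'mem x).1 (hEE' (Finset.mem_filter.1 hx.1).1)).2.1
        have hy1 := ((hE'mem y).1 (hEE' (Finset.mem_filter.1 hy.1).1)).2.1
        omega
      have : ((good.filter (fun e' => p.1 + p.2 = e + (σ - e'))).card : ℝ) ≤ 1 := by
        exact_mod_cast hle1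
      exact mul_le_of_le_one_left (hF0 _) this
    refine le_trans ?_ h2
    have h3 : ∀ e' ∈ good, κ * ω ^ s ≤
        ∑ p ∈ (A ×ˢ A).filter (fun p => p.1 + p.2 = e + (σ - e')), F (s * σ + e') := by
      intro e' he'
      rw [hgood, Finset.mem_filter] at he'
      rw [Finset.sum_const, nsmul_eq_mul]
      have h4 : κ ≤ r (e + (σ - e')) := by
        by_contra hcon
        exact he'.2 (Finset.mem_filter.2 ⟨hEE' he'.1, not_le.1 hcon⟩)
      exact mul_le_mul h4 (ih e' he'.1) (by positivity) (by positivity)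
    refine le_trans ?_ (Finset.sum_le_sum h3)
    rw [Finset.sum_const, nsmul_eq_mul, pow_succ]
    calc ω ^ s * ω ≤ ω ^ s * (m / 4 * κ) := by gcongr
      _ = m / 4 * (κ * ω ^ s) := by ring
      _ ≤ good.card * (κ * ω ^ s) := by gcongr

/-! ### Sums of many elements of a dense set -/

set_option maxHeartbeats 4000000 in
/-- A dense set `A ⊆ [M, 2M)` has, for every large `T`, many representations of `T`, up to an
error `k`, as a sum of `k = O(T / M)` elements: against the `|A| ^ k / T` that might be expected,
the loss is a power of the density `|A| / M` per summand.

Let `σ` be the difference of the popular progression, and `q ∈ (σ, 2σ]` a prime. The map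
`a ↦ ⌊a q / σ⌋` is injective, and carries a sum `≡ 0` modulo `q` to a sum that is, up to the
rounding error, a multiple of `σ`. So `J + 1` summands reach the residue of `T - e` modulo `σ`, for
every `e` at which the popular progression starts, and the progression supplies the remaining
`s σ + e`. The number `s` depends on the first `J + 1` summands; its most frequent value is used,
which costs a factor `M / T`. -/
theorem exists_many_sums (M T : ℕ) (A : Finset ℕ) (hA : A ⊆ Finset.Ico M (2 * M))
    (h4 : 4 ≤ A.card) (hT : 142 * M ^ 2 ≤ A.card * T) :
    ∃ k : ℕ, 1 ≤ k ∧ k * M ≤ 3 * T ∧ ∃ S : Finset (Fin k → ℕ),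
      (∀ f ∈ S, (∀ i, f i ∈ A) ∧ T ≤ ∑ i, f i + k ∧ ∑ i, f i ≤ T + k) ∧
      ((A.card : ℝ) ^ 3 / (512 * M ^ 2)) ^ k ≤ S.card * T := by
  have hAmem : ∀ a ∈ A, M ≤ a ∧ a < 2 * M := fun a ha => Finset.mem_Ico.1 (hA ha)
  have hAne : A.Nonempty := Finset.card_pos.1 (by omega)
  have hM : 0 < M := by
    obtain ⟨a, ha⟩ := hAne
    have := hAmem a ha
    omega
  set n := A.card with hn
  have hnM : n ≤ M := by
    refine (Finset.card_le_card hA).trans (le_of_eq ?_)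
    simp; omega
  obtain ⟨σ, hσ1, hσ2, E, hEA, hEcard, hEpop⟩ := exists_popular_progression M A hA hAne
  rw [← hn] at hEcard hEpop
  obtain ⟨q, hqp, hσq, hq2⟩ := Nat.exists_prime_lt_and_le_two_mul σ (by omega)
  have : Fact q.Prime := ⟨hqp⟩
  have hσ0 : 0 < σ := by omega
  set g : ℕ → ZMod q := fun a => ((a * q / σ : ℕ) : ZMod q) with hg
  have hglt : ∀ a ∈ A, a * q / σ < q := by
    intro a ha
    have := hAmem a ha
    rw [Nat.div_lt_iff_lt_mul hσ0, mul_comm q]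
    exact Nat.mul_lt_mul_of_pos_right (by omega) hqp.pos
  have hgmono : ∀ a b : ℕ, a < b → a * q / σ < b * q / σ := by
    intro a b hab
    have h1 : a * q / σ + 1 = (a * q + σ) / σ := (Nat.add_div_right _ hσ0).symm
    have h2 : a * q + σ ≤ b * q := by nlinarith
    have h3 := Nat.div_le_div_right (c := σ) h2
    omega
  have hginj : Set.InjOn g A := by
    intro a ha b hb hab
    simp only [hg] at hab
    rw [ZMod.natCast_eq_natCast_iff', Nat.mod_eq_of_lt (hglt a ha),
      Nat.mod_eq_of_lt (hglt b hb)] at hab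
    rcases lt_trichotomy a b with h | h | h
    · exact absurd hab (hgmono a b h).ne
    · exact h
    · exact absurd hab (hgmono b a h).ne'
  set s₀ := n / 4 with hs₀
  have hs₀n : n ≤ 8 * s₀ := by omega
  have hs₀1 : 1 ≤ s₀ := by omega
  set J := q / (2 * s₀) + 1 with hJ
  have hJq : q ≤ 2 * s₀ * J := (Nat.lt_mul_div_succ q (by omega)).le
  have hJn : J * n ≤ 33 * M := by
    have h1 : q / (2 * s₀) * (2 * s₀) ≤ q := Nat.div_mul_le_self _ _
    have h2 : q / (2 * s₀) * n ≤ q / (2 * s₀) * (8 * s₀) := Nat.mul_le_mul_left _ hs₀n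
    rw [hJ, add_mul]
    nlinarith
  have hnpos : 0 < n := by omega
  have hJM : 142 * (J * M) ≤ 33 * T := by
    apply Nat.le_of_mul_le_mul_left _ hnpos
    nlinarith [Nat.mul_le_mul_right M hJn]
  have hMT : 142 * M ≤ T := by
    apply Nat.le_of_mul_le_mul_left _ hnpos
    nlinarith
  have hTbig : (J + 1) * σ + 2 * M ≤ T := by
    have : (J + 1) * σ ≤ (J + 1) * (4 * M) := Nat.mul_le_mul_left _ hσ2.le
    nlinarith
  set t : ℕ → ℕ := fun e => (T - e) * q / σ with ht
  -- pairs of a start `e` of the progression and `J + 1` summands in the right residue class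
  set X := E.sigma (fun e => tupleRep A g (J + 1) ((t e : ℕ) : ZMod q)) with hX
  -- the height of a pair: how many multiples of `q` are missing
  set ht' : (_ : ℕ) × (Fin (J + 1) → ℕ) → ℕ := fun x =>
    (t x.1 - ∑ i, x.2 i * q / σ) / q with hht'
  have hheight : ∀ x ∈ X, ∑ i, x.2 i * q / σ + ht' x * q = t x.1 := by
    intro x hx
    rw [hX, Finset.mem_sigma, mem_tupleRep] at hx
    obtain ⟨hxE, hxA, hxsum⟩ := hx
    have he := hAmem _ (hEA hxE)
    have h1 : ∑ i, x.2 i * q / σ ≤ (J + 1) * q := by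
      refine (Finset.sum_le_sum fun i _ => (hglt _ (hxA i)).le).trans ?_
      simp
    have h2 : (J + 1) * q ≤ t x.1 := by
      simp only [ht]
      rw [Nat.le_div_iff_mul_le hσ0]
      have : (J + 1) * σ ≤ T - x.1 := by omega
      calc (J + 1) * q * σ = (J + 1) * σ * q := by ring
        _ ≤ _ := Nat.mul_le_mul_right _ this
    have h3 : q ∣ t x.1 - ∑ i, x.2 i * q / σ := by
      rw [← ZMod.natCast_eq_zero_iff, Nat.cast_sub (h1.trans h2), sub_eq_zero, ← hxsum]
      push_cast
      rfl
    rw [hht']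
    simp only
    rw [Nat.div_mul_cancel h3]
    omega
  have hheight2 : ∀ x ∈ X, ht' x * (2 * M) ≤ T := by
    intro x hx
    have h1 : ht' x * q ≤ t x.1 := by
      have := hheight x hx
      omega
    have h2 : t x.1 * σ ≤ (T - x.1) * q := Nat.div_mul_le_self _ _
    have h3 : ht' x * σ ≤ T := by
      apply Nat.le_of_mul_le_mul_right _ hqp.pos
      calc ht' x * σ * q = ht' x * q * σ := by ring
        _ ≤ t x.1 * σ := Nat.mul_le_mul_right _ h1
        _ ≤ (T - x.1) * q := h2
        _ ≤ T * q := Nat.mul_le_mul_right _ (Nat.sub_le _ _)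
    exact (Nat.mul_le_mul_left _ hσ1).trans h3
  have hMr : (0 : ℝ) < M := by exact_mod_cast hM
  have hnr : (0 : ℝ) < n := by exact_mod_cast hnpos
  have hnMr : (n : ℝ) ≤ M := by exact_mod_cast hnM
  have hTr : (0 : ℝ) < T := by exact_mod_cast (by omega : 0 < T)
  set τ : ℝ := (s₀ : ℝ) ^ 2 / q with hτ
  set ω : ℝ := (n : ℝ) ^ 6 / (512 * M ^ 4) with hω
  set θ : ℝ := (n : ℝ) ^ 3 / (512 * M ^ 2) with hθ
  have hτ0 : 0 ≤ τ := by positivity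
  have hω0 : 0 ≤ ω := by positivity
  have hθ0 : 0 ≤ θ := by positivity
  have hXcard : (E.card : ℝ) * τ ^ J ≤ X.card := by
    rw [hX, Finset.card_sigma]
    push_cast
    rw [← nsmul_eq_mul, ← Finset.sum_const]
    apply Finset.sum_le_sum
    intro e _
    exact popular_all A g hginj s₀ hs₀1 (by omega) J hJq _
  -- the most frequent height among the at most `T / (2M) + 1 ≤ T / M` possible ones
  obtain ⟨s, hsX⟩ : ∃ s : ℕ, (X.card : ℝ) * M / T ≤ (X.filter (fun x => ht' x = s)).card := by
    have hmaps : ∀ x ∈ X, ht' x ∈ Finset.range (T / (2 * M) + 1) := by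
      intro x hx
      rw [Finset.mem_range, Nat.lt_succ_iff, Nat.le_div_iff_mul_le (by omega)]
      exact hheight2 x hx
    obtain ⟨s, -, hs⟩ : ∃ s ∈ Finset.range (T / (2 * M) + 1),
        (X.card : ℝ) * M / T ≤ (X.filter (fun x => ht' x = s)).card := by
      apply Finset.exists_le_of_sum_le (by simp)
      rw [Finset.sum_const, Finset.card_range, nsmul_eq_mul]
      have h1 : ((T / (2 * M) + 1 : ℕ) : ℝ) ≤ T / M := by
        push_cast
        have h2 : ((T / (2 * M) : ℕ) : ℝ) ≤ (T : ℝ) / (2 * M) := by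
          have := @Nat.cast_div_le ℝ _ _ _ T (2 * M)
          push_cast at this
          exact this
        have h3 : (1 : ℝ) ≤ (T : ℝ) / (2 * M) := by
          rw [le_div_iff₀ (by positivity)]
          have : ((142 * M : ℕ) : ℝ) ≤ T := by exact_mod_cast hMT
          push_cast at this
          linarith
        have h4 : (T : ℝ) / M = T / (2 * M) + T / (2 * M) := by field_simp; norm_num
        linarith
      have h5 : ((∑ s ∈ Finset.range (T / (2 * M) + 1), (X.filter (fun x => ht' x = s)).card : ℕ)
          : ℝ) = X.card := by
        rw [← Finset.card_eq_sum_card_fiberwise hmaps]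
      push_cast at h5
      rw [h5]
      calc ((T / (2 * M) + 1 : ℕ) : ℝ) * (X.card * M / T) ≤ (T / M) * (X.card * M / T) := by gcongr
        _ = X.card := by field_simp
    exact ⟨s, hs⟩
  set Xs := X.filter (fun x => ht' x = s) with hXs
  have hXsne : Xs.Nonempty := by
    rw [← Finset.card_pos]
    have h1 : (0 : ℝ) < E.card := lt_of_lt_of_le (by positivity) hEcard
    have hs0r : (0 : ℝ) < s₀ := by exact_mod_cast hs₀1
    have hqr : (0 : ℝ) < q := by exact_mod_cast hqp.pos
    have h2 : (0 : ℝ) < X.card := lt_of_lt_of_le (by positivity) hXcard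
    have h3 : (0 : ℝ) < Xs.card := lt_of_lt_of_le (by positivity) hsX
    exact_mod_cast h3
  have hs2 : s * (2 * M) ≤ T := by
    obtain ⟨x, hx⟩ := hXsne
    rw [hXs, Finset.mem_filter] at hx
    rw [← hx.2]
    exact hheight2 x hx.1
  set Y := Xs.sigma (fun x => tupleRep A (fun a => (a : ℤ)) (2 * s + 1) (s * σ + x.1)) with hY
  set S : Finset (Fin ((J + 1) + (2 * s + 1)) → ℕ) :=
    Y.image (fun y => Fin.append y.1.2 y.2) with hS
  have hYcard : (Xs.card : ℝ) * ω ^ s ≤ Y.card := by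
    rw [hY, Finset.card_sigma]
    push_cast
    rw [← nsmul_eq_mul, ← Finset.sum_const]
    apply Finset.sum_le_sum
    intro x hx
    rw [hXs, Finset.mem_filter, hX, Finset.mem_sigma] at hx
    exact hEpop s _ hx.1.1
  have hScard : S.card = Y.card := by
    apply Finset.card_image_of_injOn
    rintro ⟨⟨e, f⟩, b⟩ hy ⟨⟨e', f'⟩, b'⟩ hy' h
    rw [Finset.mem_coe, hY, Finset.mem_sigma, mem_tupleRep] at hy hy'
    simp only at hy hy' h
    have hf : f = f' := by
      funext i
      have := congrFun h (Fin.castAdd _ i)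
      simpa using this
    have hb : b = b' := by
      funext i
      have := congrFun h (Fin.natAdd _ i)
      simpa using this
    subst hf hb
    have : e = e' := by
      have := hy.2.2.symm.trans hy'.2.2
      simpa using this
    subst this
    rfl
  refine ⟨(J + 1) + (2 * s + 1), Nat.le_add_left 1 (J + 1 + 2 * s), ?_, S, ?_, ?_⟩
  · nlinarith
  · intro f hf
    rw [hS, Finset.mem_image] at hf
    obtain ⟨⟨⟨e, f⟩, b⟩, hy, rfl⟩ := hf
    rw [hY, Finset.mem_sigma, mem_tupleRep] at hy
    obtain ⟨hx, hbA, hbsum⟩ := hy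
    simp only at hx hbA hbsum ⊢
    rw [hXs, Finset.mem_filter] at hx
    obtain ⟨hxX, hxs⟩ := hx
    have hh := hheight _ hxX
    rw [hxs] at hh
    rw [hX, Finset.mem_sigma, mem_tupleRep] at hxX
    obtain ⟨heE, hfA, -⟩ := hxX
    simp only at heE hfA hh
    have he := hAmem _ (hEA heE)
    refine ⟨?_, ?_⟩
    · intro i
      refine Fin.addCases (fun i => ?_) (fun i => ?_) i
      · rw [Fin.append_left]; exact hfA i
      · rw [Fin.append_right]; exact hbA i
    have hbsum' : ∑ i, b i = s * σ + e := by exact_mod_cast hbsum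
    rw [Fin.sum_univ_add]
    simp only [Fin.append_left, Fin.append_right]
    rw [hbsum']
    have hG1 : (∑ i, f i * q / σ) * σ ≤ (∑ i, f i) * q := by
      rw [Finset.sum_mul, Finset.sum_mul]
      exact Finset.sum_le_sum fun i _ => Nat.div_mul_le_self _ _
    have hG2 : (∑ i, f i) * q ≤ (∑ i, f i * q / σ) * σ + (J + 1) * σ := by
      have : ∀ i ∈ (Finset.univ : Finset (Fin (J + 1))), f i * q ≤ (f i * q / σ) * σ + σ := by
        intro i _
        have := Nat.lt_div_mul_add (a := f i * q) hσ0
        omega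
      rw [Finset.sum_mul, Finset.sum_mul]
      refine (Finset.sum_le_sum this).trans (le_of_eq ?_)
      rw [Finset.sum_add_distrib]
      simp
    have hG3 : t e * σ ≤ (T - e) * q := Nat.div_mul_le_self _ _
    have hG4 : (T - e) * q < t e * σ + σ := Nat.lt_div_mul_add hσ0
    have hG5 : (∑ i, f i * q / σ) * σ + s * q * σ = t e * σ := by rw [← hh]; ring
    set Fs := ∑ i, f i
    have hlow : T - e ≤ Fs + s * σ := by
      by_contra hcon
      have h1 : Fs + s * σ + 1 ≤ T - e := by omega
      have h2 := Nat.mul_le_mul_right q h1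
      nlinarith
    have hup : Fs + s * σ ≤ T - e + (J + 1) := by
      apply Nat.le_of_mul_le_mul_right _ hqp.pos
      have h1 : (J + 1) * σ ≤ (J + 1) * q := Nat.mul_le_mul_left _ hσq.le
      nlinarith
    omega
  · rw [hScard]
    have hqr : (0 : ℝ) < q := by exact_mod_cast hqp.pos
    have hq8 : (q : ℝ) ≤ 8 * M := by exact_mod_cast (by omega : q ≤ 8 * M)
    have hτθ : θ ≤ τ := by
      have h1 : (n : ℝ) / 8 ≤ s₀ := by
        have : (n : ℝ) ≤ 8 * s₀ := by exact_mod_cast hs₀n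
        linarith
      calc θ = ((n : ℝ) / 8) ^ 2 / (8 * M) * (n / M) := by rw [hθ]; field_simp; norm_num
        _ ≤ ((n : ℝ) / 8) ^ 2 / (8 * M) * 1 := by
            gcongr
            rw [div_le_one hMr]; exact hnMr
        _ = ((n : ℝ) / 8) ^ 2 / (8 * M) := mul_one _
        _ ≤ τ := by rw [hτ]; gcongr
    have hωθ : θ ^ 2 ≤ ω := by
      have : θ ^ 2 = ω / 512 := by rw [hθ, hω]; field_simp
      rw [this]
      linarith
    have hEθ : θ ^ 2 ≤ E.card * M := by
      have h1 : θ ≤ n := by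
        have : θ = n * ((n / M) * (n / M)) / 512 := by rw [hθ]; field_simp
        rw [this]
        have h2 : (n : ℝ) / M ≤ 1 := by rw [div_le_one hMr]; exact hnMr
        have h3 : (n : ℝ) / M * (n / M) ≤ 1 := mul_le_one₀ h2 (by positivity) h2
        have h4 : (n : ℝ) * ((n / M) * (n / M)) ≤ n * 1 := by gcongr
        linarith
      have h5 : θ ≤ n / 2 := by
        have : θ = n * ((n / M) * (n / M)) / 512 := by rw [hθ]; field_simp
        have h2 : (n : ℝ) / M ≤ 1 := by rw [div_le_one hMr]; exact hnMr
        have h3 : (n : ℝ) / M * (n / M) ≤ 1 := mul_le_one₀ h2 (by positivity) h2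
        have h4 : (n : ℝ) * ((n / M) * (n / M)) ≤ n * 1 := by gcongr
        rw [this]
        linarith
      calc θ ^ 2 ≤ ((n : ℝ) / 2) ^ 2 := by gcongr
        _ = (n : ℝ) ^ 2 / (4 * M) * M := by field_simp; norm_num
        _ ≤ _ := by gcongr
    calc θ ^ ((J + 1) + (2 * s + 1)) = θ ^ 2 * θ ^ J * (θ ^ 2) ^ s := by
          rw [← pow_mul, ← pow_add, ← pow_add]
          congr 1
          omega
      _ ≤ (E.card * M) * τ ^ J * ω ^ s := by gcongr
      _ = (E.card * τ ^ J) * M * ω ^ s := by ring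
      _ ≤ X.card * M * ω ^ s := by gcongr
      _ = (X.card * M / T) * ω ^ s * T := by field_simp
      _ ≤ Xs.card * ω ^ s * T := by gcongr
      _ ≤ Y.card * T := by gcongr

/-! ### From sums to square-free products -/

/-- At least `∏ (|C i| / 2)` of the tuples in `∏ C i` have distinct entries, once every `C i` has at
least twice as many elements as there are factors. -/
theorem card_injective_tuples (K : ℕ) : ∀ (k : ℕ) (C : Fin k → Finset ℕ), k ≤ K →
    (∀ i, 2 * K ≤ (C i).card) →
    ∏ i, ((C i).card : ℝ) / 2 ≤ ((Fintype.piFinset C).filter Function.Injective).card := by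
  intro k
  induction k with
  | zero =>
    intro C _ _
    have : (Fintype.piFinset C).filter Function.Injective = Finset.univ := by
      ext p
      simpa [Fintype.mem_piFinset] using fun _ => Function.injective_of_subsingleton p
    rw [this]
    simp
  | succ k ih =>
    intro C hk hC
    have ih' := ih (fun i => C i.succ) (by omega) (fun i => hC _)
    set R := (Fintype.piFinset fun i : Fin k => C i.succ).filter Function.Injective with hR
    have hmaps : ∀ y ∈ R.sigma (fun p => C 0 \ Finset.univ.image p),
        (Fin.cons y.2 y.1 : Fin (k + 1) → ℕ) ∈
          (Fintype.piFinset C).filter Function.Injective := by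
      rintro ⟨p, a⟩ hy
      rw [Finset.mem_sigma, hR, Finset.mem_filter, Fintype.mem_piFinset, Finset.mem_sdiff] at hy
      obtain ⟨⟨h1, h2⟩, h3, h4⟩ := hy
      rw [Finset.mem_filter, Fintype.mem_piFinset]
      refine ⟨fun i => Fin.cases (by simpa using h3) (fun i => by simpa using h1 i) i, ?_⟩
      rw [Fin.cons_injective_iff]
      exact ⟨by simpa using h4, h2⟩
    have hcard := Finset.card_le_card_of_injOn 
      (fun y : (_ : Fin k → ℕ) × ℕ => (Fin.cons y.2 y.1 : Fin (k + 1) → ℕ)) hmaps (by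
        rintro ⟨p, a⟩ - ⟨q, b⟩ - h
        simp only [Fin.cons_inj] at h
        obtain ⟨rfl, rfl⟩ := h
        rfl)
    rw [Finset.card_sigma] at hcard
    have hfib : ∀ p ∈ R, ((C 0).card : ℝ) / 2 ≤ (C 0 \ Finset.univ.image p).card := by
      intro p _
      have h1 := Finset.le_card_sdiff (Finset.univ.image p) (C 0)
      have h2 : (Finset.univ.image p).card ≤ k := by
        simpa using Finset.card_image_le (s := Finset.univ) (f := p)
      have h3 := hC 0
      have h4 : (C 0).card ≤ 2 * (C 0 \ Finset.univ.image p).card := by omega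
      have h5 : ((C 0).card : ℝ) ≤ 2 * (C 0 \ Finset.univ.image p).card := by exact_mod_cast h4
      linarith
    rw [Fin.prod_univ_succ]
    calc ((C 0).card : ℝ) / 2 * ∏ i : Fin k, ((C i.succ).card : ℝ) / 2
        ≤ ((C 0).card : ℝ) / 2 * R.card := by gcongr
      _ = ∑ p ∈ R, ((C 0).card : ℝ) / 2 := by rw [Finset.sum_const, nsmul_eq_mul, mul_comm]
      _ ≤ ∑ p ∈ R, ((C 0 \ Finset.univ.image p).card : ℝ) := Finset.sum_le_sum hfib
      _ ≤ _ := by exact_mod_cast hcard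

/-- Multiplying out: many solutions of `⌊log p₁⌋ + ⋯ + ⌊log pₖ⌋ ≈ T` give many square-free
products `p₁ ⋯ pₖ`, each of which arises from at most `k ^ k` tuples. -/
theorem card_products_ge (Q : Finset ℕ) (hQ : ∀ p ∈ Q, p.Prime) (k T : ℕ) (B X : ℝ) (hB : 0 ≤ B)
    (hX : Real.exp (T + 2 * k) ≤ X) (S : Finset (Fin k → ℕ))
    (hS : ∀ f ∈ S, T ≤ ∑ i, f i + k ∧ ∑ i, f i ≤ T + k ∧
      ∀ i, 2 * k ≤ (Q.filter fun p : ℕ => ⌊Real.log p⌋₊ = f i).card ∧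
        2 * B * Real.exp (f i) ≤ (Q.filter fun p : ℕ => ⌊Real.log p⌋₊ = f i).card) :
    S.card * (Real.exp ((T : ℝ) - k) * B ^ k) ≤
      (k : ℝ) ^ k * ((Finset.range (⌊X⌋₊ + 1)).filter
        fun m : ℕ => Squarefree m ∧ m.primeFactors ⊆ Q).card := by
  set U := (Fintype.piFinset fun _ : Fin k => Q).filter
    (fun p : Fin k → ℕ => Function.Injective p ∧ (fun i => ⌊Real.log (p i)⌋₊) ∈ S) with hU
  have hUmem : ∀ p ∈ U, (∀ i, p i ∈ Q) ∧ Function.Injective p ∧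
      (fun i => ⌊Real.log (p i)⌋₊) ∈ S := by
    intro p hp
    rwa [hU, Finset.mem_filter, Fintype.mem_piFinset] at hp
  have hlow : (S.card : ℝ) * (Real.exp ((T : ℝ) - k) * B ^ k) ≤ U.card := by
    rw [Finset.card_eq_sum_card_fiberwise (f := fun (p : Fin k → ℕ) i => ⌊Real.log (p i)⌋₊) (t := S)
      (fun p hp => (hUmem p hp).2.2)]
    push_cast
    rw [← nsmul_eq_mul, ← Finset.sum_const]
    apply Finset.sum_le_sum
    intro f hf
    obtain ⟨h1, -, h3⟩ := hS f hf
    have h4 := card_injective_tuples k k (fun i => Q.filter fun p : ℕ => ⌊Real.log p⌋₊ = f i)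
      le_rfl (fun i => (h3 i).1)
    calc Real.exp ((T : ℝ) - k) * B ^ k ≤ Real.exp (∑ i, (f i : ℝ)) * B ^ k := by
          gcongr
          have : (T : ℝ) ≤ ∑ i, (f i : ℝ) + k := by exact_mod_cast h1
          linarith
      _ = ∏ i, (2 * B * Real.exp (f i)) / 2 := by
          rw [Real.exp_sum]
          have : ∀ i : Fin k, (2 * B * Real.exp (f i)) / 2 = Real.exp (f i) * B := by
            intro i; ring
          simp only [this]
          rw [Finset.prod_mul_distrib]
          simp
      _ ≤ ∏ i, ((Q.filter fun p : ℕ => ⌊Real.log p⌋₊ = f i).card : ℝ) / 2 := by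
          apply Finset.prod_le_prod
          · intro i _; positivity
          · intro i _
            have := (h3 i).2
            gcongr
      _ ≤ _ := h4
      _ ≤ _ := by
          gcongr
          intro p hp
          rw [Finset.mem_filter, Fintype.mem_piFinset] at hp
          have h5 : (fun i => ⌊Real.log (p i)⌋₊) = f := by
            funext i
            exact (Finset.mem_filter.1 (hp.1 i)).2
          rw [Finset.mem_filter, hU, Finset.mem_filter, Fintype.mem_piFinset]
          refine ⟨⟨fun i => (Finset.mem_filter.1 (hp.1 i)).1, hp.2, ?_⟩, h5⟩
          rw [h5]; exact hf
  have hpf : ∀ p ∈ U, (∏ i, p i).primeFactors = Finset.univ.image p := by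
    intro p hp
    obtain ⟨h1, h2, -⟩ := hUmem p hp
    have : ∏ i, p i = ∏ r ∈ Finset.univ.image p, r := by
      rw [Finset.prod_image (fun a _ b _ h => h2 h)]
    rw [this]
    apply Nat.primeFactors_prod
    intro r hr
    obtain ⟨i, -, rfl⟩ := Finset.mem_image.1 hr
    exact hQ _ (h1 i)
  have hup : U.card ≤ k ^ k * (U.image fun p => ∏ i, p i).card := by
    apply Finset.card_le_mul_card_image
    intro m hm
    obtain ⟨p, hp, rfl⟩ := Finset.mem_image.1 hm
    have hcard : (Fintype.piFinset fun _ : Fin k => (∏ i, p i).primeFactors).card = k ^ k := by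
      rw [Fintype.card_piFinset, hpf p hp, Finset.card_image_of_injective _ (hUmem p hp).2.1]
      simp
    rw [← hcard]
    apply Finset.card_le_card
    intro q hq
    rw [Finset.mem_filter] at hq
    rw [Fintype.mem_piFinset]
    intro i
    rw [← hq.2, hpf q hq.1]
    exact Finset.mem_image_of_mem _ (Finset.mem_univ i)
  have himg : (U.image fun p => ∏ i, p i) ⊆ (Finset.range (⌊X⌋₊ + 1)).filter
      fun m : ℕ => Squarefree m ∧ m.primeFactors ⊆ Q := by
    intro m hm
    obtain ⟨p, hp, rfl⟩ := Finset.mem_image.1 hm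
    obtain ⟨h1, h2, h3⟩ := hUmem p hp
    have hppos : ∀ i, 0 < (p i : ℝ) := fun i => by exact_mod_cast (hQ _ (h1 i)).pos
    rw [Finset.mem_filter, Finset.mem_range, Nat.lt_succ_iff]
    refine ⟨?_, ?_, ?_⟩
    · apply Nat.le_floor
      push_cast
      refine le_trans ?_ hX
      calc ∏ i, (p i : ℝ) ≤ ∏ i, Real.exp ((⌊Real.log (p i)⌋₊ : ℝ) + 1) := by
            apply Finset.prod_le_prod
            · intro i _; exact (hppos i).le
            · intro i _
              rw [← Real.log_le_iff_le_exp (hppos i)]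
              exact (Nat.lt_floor_add_one _).le
        _ = Real.exp (∑ i, ((⌊Real.log (p i)⌋₊ : ℝ) + 1)) := (Real.exp_sum _ _).symm
        _ ≤ _ := by
            apply Real.exp_le_exp.2
            have h4 : ((∑ i, ⌊Real.log (p i)⌋₊ : ℕ) : ℝ) ≤ ((T + k : ℕ) : ℝ) := by
              exact_mod_cast (hS _ h3).2.1
            push_cast at h4
            rw [Finset.sum_add_distrib]
            simp only [Finset.sum_const, Finset.card_univ, Fintype.card_fin, nsmul_eq_mul, mul_one]
            linarith
    · apply Finset.squarefree_prod_of_pairwise_isCoprime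
      · intro i _ j _ hij
        simp only [Function.onFun]
        exact (Nat.coprime_iff_isRelPrime).1 ((Nat.coprime_primes (hQ _ (h1 i)) (hQ _ (h1 j))).2 (fun h => hij (h2 h)))
      · intro i _
        exact (hQ _ (h1 i)).prime.squarefree
    · rw [hpf p hp]
      intro r hr
      obtain ⟨i, -, rfl⟩ := Finset.mem_image.1 hr
      exact h1 i
  have h5 := hup.trans (Nat.mul_le_mul_left _ (Finset.card_le_card himg))
  refine hlow.trans ?_
  exact_mod_cast h5

/-! ### Chebyshev's bound and a dense block of cells -/

/-- Chebyshev: the primes with `⌊log p⌋ = a` contribute at most `4` to `∑ log p / p`. -/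
theorem cell_sum_log_div_le (Q : Finset ℕ) (hQ : ∀ p ∈ Q, p.Prime) (a : ℕ) :
    ∑ p ∈ Q.filter (fun p : ℕ => ⌊Real.log p⌋₊ = a), Real.log p / p ≤ 4 := by
  have hlog4 : Real.log 4 ≤ 1.3863 := by
    have : Real.log 4 = 2 * Real.log 2 := by
      rw [show (4 : ℝ) = 2 ^ 2 by norm_num, Real.log_pow]; norm_num
    have := Real.log_two_lt_d9
    linarith
  calc ∑ p ∈ Q.filter (fun p : ℕ => ⌊Real.log p⌋₊ = a), Real.log p / p
      ≤ ∑ p ∈ Q.filter (fun p : ℕ => ⌊Real.log p⌋₊ = a), Real.log p * Real.exp (-(a : ℝ)) := by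
        apply Finset.sum_le_sum
        intro p hp
        rw [Finset.mem_filter] at hp
        have hp1 : (1 : ℝ) ≤ p := by exact_mod_cast (hQ p hp.1).one_le
        have h1 : (a : ℝ) ≤ Real.log p := by
          rw [← hp.2]; exact Nat.floor_le (Real.log_nonneg hp1)
        have h2 : Real.exp a ≤ p := by
          rwa [Real.le_log_iff_exp_le (by linarith)] at h1
        rw [Real.exp_neg, ← div_eq_mul_inv]
        have := Real.log_nonneg hp1
        gcongr
    _ = (∑ p ∈ Q.filter (fun p : ℕ => ⌊Real.log p⌋₊ = a), Real.log p) * Real.exp (-(a : ℝ)) := by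
        rw [Finset.sum_mul]
    _ ≤ Chebyshev.theta (Real.exp (a + 1)) * Real.exp (-(a : ℝ)) := by
        gcongr
        rw [Chebyshev.theta_eq_sum_Icc]
        apply Finset.sum_le_sum_of_subset_of_nonneg
        · intro p hp
          rw [Finset.mem_filter] at hp ⊢
          have hp0 : (0 : ℝ) < p := by exact_mod_cast (hQ p hp.1).pos
          refine ⟨?_, hQ p hp.1⟩
          rw [Finset.mem_Icc]
          refine ⟨Nat.zero_le _, Nat.le_floor ?_⟩
          rw [← Real.log_le_iff_le_exp hp0, ← hp.2]
          exact (Nat.lt_floor_add_one _).le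
        · intro p hp _
          exact Real.log_natCast_nonneg p
    _ ≤ (Real.log 4 * Real.exp (a + 1)) * Real.exp (-(a : ℝ)) := by
        gcongr
        exact Chebyshev.theta_le_log4_mul_x (Real.exp_pos _).le
    _ = Real.log 4 * Real.exp 1 := by
        rw [mul_assoc, ← Real.exp_add]; ring_nf
    _ ≤ 1.3863 * 2.72 := by
        have := Real.exp_one_lt_d9
        gcongr
        linarith
    _ ≤ 4 := by norm_num

/-- Mertens' upper bound for `∑ log p / p`, in terms of the integer parts of `log p`. -/
theorem sum_log_div_le (Q : Finset ℕ) (hQ : ∀ p ∈ Q, p.Prime) (I : Finset ℕ)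
    (hI : ∀ p ∈ Q, ⌊Real.log p⌋₊ ∈ I) : ∑ p ∈ Q, Real.log p / p ≤ 4 * I.card := by
  rw [← Finset.sum_fiberwise_of_maps_to hI]
  calc _ ≤ ∑ _a ∈ I, (4 : ℝ) := Finset.sum_le_sum fun a _ => cell_sum_log_div_le Q hQ a
    _ = _ := by rw [Finset.sum_const, nsmul_eq_mul, mul_comm]

theorem sum_inv_le (Q : Finset ℕ) (hQ : ∀ p ∈ Q, p.Prime) (M : ℕ) (hM : 0 < M) (I : Finset ℕ)
    (hI : ∀ p ∈ Q, ⌊Real.log p⌋₊ ∈ I) (hIM : ∀ a ∈ I, M ≤ a) :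
    ∑ p ∈ Q, (1 : ℝ) / p ≤ 4 * I.card / M := by
  have hMr : (0 : ℝ) < M := by exact_mod_cast hM
  rw [le_div_iff₀ hMr, Finset.sum_mul]
  refine (Finset.sum_le_sum fun p hp => ?_).trans (sum_log_div_le Q hQ I hI)
  have hp1 : (1 : ℝ) ≤ p := by exact_mod_cast (hQ p hp).one_le
  have h1 : (M : ℝ) ≤ Real.log p :=
    (by exact_mod_cast hIM _ (hI p hp) : (M : ℝ) ≤ ⌊Real.log p⌋₊).trans
      (Nat.floor_le (Real.log_nonneg hp1))
  rw [div_mul_eq_mul_div, one_mul]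
  gcongr

/-- A set of primes of large logarithmic mass contains, in some dyadic range `[M, 2M)` for
`⌊log p⌋`, mass proportional to `M / L`: the weights `2 ^ i / L` with `2 ^ i ≤ L` sum to at
most `2`. -/
theorem exists_dyadic_block (L : ℝ) (hL : 1 ≤ L) (Q : Finset ℕ)
    (hQL : ∀ p ∈ Q, 1 ≤ ⌊Real.log p⌋₊ ∧ Real.log p ≤ L)
    (hmass : 10000 ≤ ∑ p ∈ Q, (1 : ℝ) / p) :
    ∃ M : ℕ, 0 < M ∧
      5000 * M / L ≤ ∑ p ∈ Q.filter (fun p : ℕ => ⌊Real.log p⌋₊ ∈ Finset.Ico M (2 * M)), (1 : ℝ) / p := by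
  set N := Nat.log 2 ⌊L⌋₊ with hN
  have hLpos : 0 < L := by linarith
  have hmaps : ∀ p ∈ Q, Nat.log 2 ⌊Real.log p⌋₊ ∈ Finset.range (N + 1) := by
    intro p hp
    rw [Finset.mem_range, Nat.lt_succ_iff]
    exact Nat.log_mono_right (Nat.floor_le_floor (hQL p hp).2)
  have hgeo : ∑ i ∈ Finset.range (N + 1), 5000 * (2 : ℝ) ^ i / L ≤
      ∑ i ∈ Finset.range (N + 1), ∑ p ∈ Q.filter (fun p : ℕ => Nat.log 2 ⌊Real.log p⌋₊ = i), (1 : ℝ) / p := by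
    rw [Finset.sum_fiberwise_of_maps_to hmaps]
    refine le_trans ?_ hmass
    rw [← Finset.sum_div, ← Finset.mul_sum, geom_sum_eq (by norm_num), div_le_iff₀ hLpos]
    have h1 : (2 : ℝ) ^ N ≤ L := by
      have h2 : 2 ^ N ≤ ⌊L⌋₊ := Nat.pow_log_le_self 2 (by
        have := (Nat.one_le_floor_iff L).2 hL
        omega)
      calc (2 : ℝ) ^ N ≤ (⌊L⌋₊ : ℝ) := by exact_mod_cast h2
        _ ≤ L := Nat.floor_le hLpos.le
    rw [pow_succ]
    linarith
  obtain ⟨i, -, hi⟩ := Finset.exists_le_of_sum_le (by simp) hgeo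
  refine ⟨2 ^ i, by positivity, ?_⟩
  push_cast
  refine hi.trans (le_of_eq ?_)
  apply Finset.sum_congr _ (fun _ _ => rfl)
  apply Finset.filter_congr
  intro p hp
  have := (hQL p hp).1
  rw [Nat.log_eq_iff (Or.inr ⟨by norm_num, by omega⟩), Finset.mem_Ico, pow_succ, mul_comm 2]

/-- Inside the dyadic range the mass spreads over a proportion `≫ M / L` of all the cells
`⌊log p⌋ = a`, and every chosen cell contains a proportion `≫ 1 / L` of the integers. -/
theorem exists_dense_block (L v : ℝ) (hL : 1 ≤ L) (hv : 1 ≤ v) (hvL : 6 * v ≤ L)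
    (Q : Finset ℕ) (hQ : ∀ p ∈ Q, p.Prime)
    (hQL : ∀ p ∈ Q, L < 3 * v * Real.log p ∧ Real.log p ≤ L)
    (hmass : 10000 ≤ ∑ p ∈ Q, (1 : ℝ) / p) :
    ∃ M : ℕ, ∃ A : Finset ℕ, A ⊆ Finset.Ico M (2 * M) ∧ L < 6 * v * M ∧ 1250 * M ≤ L ∧
      5000 * (M : ℝ) ^ 2 ≤ 8 * L * A.card ∧
      ∀ a ∈ A, 2500 / L * Real.exp a ≤ (Q.filter fun p : ℕ => ⌊Real.log p⌋₊ = a).card := by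
  have hLpos : 0 < L := by linarith
  obtain ⟨M, hM, hMmass⟩ := exists_dyadic_block L hL Q (fun p hp => by
    refine ⟨?_, (hQL p hp).2⟩
    rw [Nat.one_le_floor_iff]
    have := (hQL p hp).1
    by_contra! hcon
    nlinarith) hmass
  have hMr : (0 : ℝ) < M := by exact_mod_cast hM
  set D := Q.filter (fun p : ℕ => ⌊Real.log p⌋₊ ∈ Finset.Ico M (2 * M)) with hD
  have hDQ : ∀ p ∈ D, p ∈ Q ∧ ⌊Real.log p⌋₊ ∈ Finset.Ico M (2 * M) := by
    intro p hp
    rwa [hD, Finset.mem_filter] at hp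
  have hDmass : ∑ p ∈ D, (1 : ℝ) / p ≤ 4 := by
    refine (sum_inv_le D (fun p hp => hQ p (hDQ p hp).1) M hM (Finset.Ico M (2 * M))
      (fun p hp => (hDQ p hp).2) (fun a ha => (Finset.mem_Ico.1 ha).1)).trans ?_
    rw [Nat.card_Ico, show 2 * M - M = M by omega]
    field_simp
    norm_num
  set W : ℕ → ℝ := fun a => ∑ p ∈ D.filter (fun p : ℕ => ⌊Real.log p⌋₊ = a), (1 : ℝ) / p with hW
  have hWsum : ∑ a ∈ Finset.Ico M (2 * M), W a = ∑ p ∈ D, (1 : ℝ) / p :=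
    Finset.sum_fiberwise_of_maps_to (fun p hp => (hDQ p hp).2) _
  set A := (Finset.Ico M (2 * M)).filter (fun a => 2500 / L ≤ W a) with hA
  refine ⟨M, A, Finset.filter_subset _ _, ?_, ?_, ?_, ?_⟩
  · have hpos : 0 < ∑ p ∈ D, (1 : ℝ) / p := lt_of_lt_of_le (by positivity) hMmass
    obtain ⟨p, hp⟩ : D.Nonempty := by
      rw [Finset.nonempty_iff_ne_empty]
      intro h
      rw [h] at hpos
      simp at hpos
    have h1 := (hQL p (hDQ p hp).1).1
    have h2 := Nat.lt_floor_add_one (Real.log p)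
    have h3 : ((⌊Real.log p⌋₊ + 1 : ℕ) : ℝ) ≤ ((2 * M : ℕ) : ℝ) := by
      exact_mod_cast (Finset.mem_Ico.1 (hDQ p hp).2).2
    push_cast at h3
    have h4 : Real.log p ≤ 2 * M := by linarith
    calc L < 3 * v * Real.log p := h1
      _ ≤ 3 * v * (2 * M) := by gcongr
      _ = _ := by ring
  · have h1 := hMmass.trans hDmass
    rw [div_le_iff₀ hLpos] at h1
    linarith
  · have h1 : ∑ a ∈ Finset.Ico M (2 * M), W a ≤ A.card * (4 / M) + M * (2500 / L) := by
      rw [← Finset.sum_filter_add_sum_filter_not _ (fun a => 2500 / L ≤ W a)]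
      apply add_le_add
      · rw [← hA, ← nsmul_eq_mul, ← Finset.sum_const]
        apply Finset.sum_le_sum
        intro a ha
        rw [hA, Finset.mem_filter, Finset.mem_Ico] at ha
        have := sum_inv_le (D.filter fun p : ℕ => ⌊Real.log p⌋₊ = a)
          (fun p hp => hQ p (hDQ p (Finset.mem_filter.1 hp).1).1) M hM {a}
          (fun p hp => by rw [Finset.mem_singleton]; exact (Finset.mem_filter.1 hp).2)
          (fun b hb => by rw [Finset.mem_singleton.1 hb]; exact ha.1.1)
        simpa [hW] using this
      · calc _ ≤ ∑ _a ∈ (Finset.Ico M (2 * M)).filter (fun a => ¬ 2500 / L ≤ W a), 2500 / L := by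
              apply Finset.sum_le_sum
              intro a ha
              exact (not_le.1 (Finset.mem_filter.1 ha).2).le
          _ ≤ ∑ _a ∈ Finset.Ico M (2 * M), 2500 / L := by
              apply Finset.sum_le_sum_of_subset_of_nonneg (Finset.filter_subset _ _)
              intro _ _ _
              positivity
          _ = _ := by
              rw [Finset.sum_const, nsmul_eq_mul, Nat.card_Ico, show 2 * M - M = M by omega]
    rw [hWsum] at h1
    have h2 : 2500 * M / L ≤ A.card * (4 / M) := by
      have h3 : 5000 * M / L = 2500 * M / L + M * (2500 / L) := by ring
      linarith [hMmass.trans h1]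
    rw [mul_div_assoc', div_le_div_iff₀ hLpos hMr] at h2
    nlinarith
  · intro a ha
    rw [hA, Finset.mem_filter, Finset.mem_Ico] at ha
    have h1 : W a ≤ (Q.filter fun p : ℕ => ⌊Real.log p⌋₊ = a).card * Real.exp (-(a : ℝ)) := by
      rw [← nsmul_eq_mul, ← Finset.sum_const]
      simp only [hW]
      calc _ ≤ ∑ p ∈ D.filter (fun p : ℕ => ⌊Real.log p⌋₊ = a), Real.exp (-(a : ℝ)) := by
            apply Finset.sum_le_sum
            intro p hp
            rw [Finset.mem_filter] at hp
            have hp1 : (1 : ℝ) ≤ p := by exact_mod_cast (hQ p (hDQ p hp.1).1).one_le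
            have h1 : (a : ℝ) ≤ Real.log p := by
              rw [← hp.2]; exact Nat.floor_le (Real.log_nonneg hp1)
            have h2 : Real.exp a ≤ p := by
              rwa [Real.le_log_iff_exp_le (by linarith)] at h1
            rw [Real.exp_neg, ← one_div]
            gcongr
        _ ≤ _ := by
            apply Finset.sum_le_sum_of_subset_of_nonneg
            · exact Finset.filter_subset_filter _ (Finset.filter_subset _ _)
            · intro _ _ _
              positivity
    calc 2500 / L * Real.exp a ≤ W a * Real.exp a := by gcongr; exact ha.2
      _ ≤ (Q.filter fun p : ℕ => ⌊Real.log p⌋₊ = a).card * Real.exp (-(a : ℝ)) * Real.exp a := by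
          gcongr
      _ = _ := by rw [mul_assoc, ← Real.exp_add]; simp

/-! ### Products of large primes at every scale -/

set_option maxHeartbeats 1000000 in
/-- Products of primes from `Q` reach every scale `X ∈ [√x, x]`, where `L = log x`: among the
integers up to `X` the proportion of square-free products of primes of `Q` is at least
`v ^ (-127 v) / L`. The exponent is `127 = 5 · 18 + 37`: each of the `k ≤ 18 v` prime factors costs
`v ^ 5`, and the gap between `T` and `log X` costs at most `exp (37 v)`. -/
theorem many_products (L v X : ℝ) (hv : 1 ≤ v) (hvL : 10000 * v ^ 2 ≤ L) (hX0 : 0 < X)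
    (hX1 : L / 2 ≤ Real.log X) (hX2 : Real.log X ≤ L)
    (Q : Finset ℕ) (hQ : ∀ p ∈ Q, p.Prime)
    (hQL : ∀ p ∈ Q, L < 3 * v * Real.log p ∧ Real.log p ≤ L)
    (hmass : 10000 ≤ ∑ p ∈ Q, (1 : ℝ) / p) :
    X * v ^ (-(127 * v)) ≤ L * ((Finset.range (⌊X⌋₊ + 1)).filter
        fun m : ℕ => Squarefree m ∧ m.primeFactors ⊆ Q).card := by
  have hvpos : 0 < v := by linarith
  have hvL' : 10000 * v ≤ L := by nlinarith
  have hLpos : 0 < L := by linarith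
  obtain ⟨M, A, hAM, hM1, hM2, hAcard, hcell⟩ :=
    exists_dense_block L v (by linarith) hv (by linarith) Q hQ hQL hmass
  have hMr : (0 : ℝ) < M := by
    by_contra! hcon
    have : 6 * v * M ≤ 0 := mul_nonpos_of_nonneg_of_nonpos (by positivity) hcon
    linarith
  have hv208 : 208 ≤ v := by
    by_contra! hcon
    nlinarith
  -- `T` leaves room for the rounding errors `2k`, with `k ≤ 18 v`
  set T := ⌊Real.log X⌋₊ - ⌈36 * v⌉₊ with hT
  have hlogX0 : 0 ≤ Real.log X := by linarith
  have hle : ⌈36 * v⌉₊ ≤ ⌊Real.log X⌋₊ := by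
    apply Nat.le_floor
    have := Nat.ceil_lt_add_one (by positivity : 0 ≤ 36 * v)
    linarith
  have hTr : (T : ℝ) = ⌊Real.log X⌋₊ - ⌈36 * v⌉₊ := by rw [hT, Nat.cast_sub hle]
  have hT1 : (T : ℝ) + 36 * v ≤ Real.log X := by
    have h1 := Nat.le_ceil (36 * v)
    have h2 := Nat.floor_le hlogX0
    linarith
  have hT2 : Real.log X ≤ T + 36 * v + 2 := by
    have h1 := Nat.ceil_lt_add_one (by positivity : 0 ≤ 36 * v)
    have h2 := Nat.lt_floor_add_one (Real.log X)
    linarith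
  have hT4 : L / 4 ≤ T := by linarith
  have hTpos : (0 : ℝ) < T := by linarith
  have hTL : (T : ℝ) ≤ L := by linarith
  have hA4 : 4 ≤ A.card := by
    have h1 : L ^ 2 ≤ (6 * v * M) ^ 2 := by gcongr
    have h2 : 4 * L ≤ L * A.card := by nlinarith
    have h3 : (4 : ℝ) ≤ A.card := by
      by_contra! hcon
      nlinarith
    exact_mod_cast h3
  have hAT : 142 * M ^ 2 ≤ A.card * T := by
    have h1 : (142 * (M : ℝ) ^ 2) ≤ A.card * T := by
      have h2 : (A.card : ℝ) * (L / 4) ≤ A.card * T := by gcongr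
      nlinarith [sq_nonneg (M : ℝ)]
    exact_mod_cast h1
  obtain ⟨k, hk1, hkM, S, hS, hScard⟩ := exists_many_sums M T A hAM hA4 hAT
  have hkMr : (k : ℝ) * M ≤ 3 * T := by exact_mod_cast hkM
  have hk1r : (1 : ℝ) ≤ k := by exact_mod_cast hk1
  have hk18 : (k : ℝ) ≤ 18 * v := by
    have h1 : k * L ≤ (18 * v) * L := by
      calc k * L ≤ k * (6 * v * M) := by gcongr
        _ = 6 * v * (k * M) := by ring
        _ ≤ 6 * v * (3 * T) := by gcongr
        _ ≤ 6 * v * (3 * L) := by gcongr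
        _ = _ := by ring
    exact le_of_mul_le_mul_right h1 hLpos
  have hprod := card_products_ge Q hQ k T (1250 / L) X (by positivity) (by
    rw [← Real.le_log_iff_exp_le hX0]
    linarith) S (fun f hf => by
    obtain ⟨h1, h2, h3⟩ := hS f hf
    refine ⟨h2, h3, fun i => ?_⟩
    have h4 := hcell _ (h1 i)
    refine ⟨?_, le_trans (le_of_eq (by ring)) h4⟩
    have h5 : (2 * k : ℝ) ≤ 2500 / L * Real.exp (f i) := by
      have h6 : (M : ℝ) ≤ f i := by exact_mod_cast (Finset.mem_Ico.1 (hAM (h1 i))).1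
      have h7 : (M : ℝ) ^ 3 / 6 ≤ Real.exp (f i) := by
        have := Real.pow_div_factorial_le_exp (M : ℝ) hMr.le 3
        norm_num [Nat.factorial] at this
        exact this.trans (Real.exp_le_exp.2 h6)
      have h8 : L ^ 3 ≤ 216 * v ^ 3 * M ^ 3 := by
        calc L ^ 3 ≤ (6 * v * M) ^ 3 := by gcongr
          _ = _ := by ring
      have h9 : (10000 * v ^ 2) * (10000 * v ^ 2) * L ≤ L ^ 3 := by
        calc (10000 * v ^ 2) * (10000 * v ^ 2) * L ≤ L * L * L := by gcongr
          _ = _ := by ring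
      have h10 : v * L * v ^ 3 * 10 ^ 8 ≤ 216 * M ^ 3 * v ^ 3 := by linarith
      have h11 : v * L * 10 ^ 8 ≤ 216 * M ^ 3 := by
        have h12 : (0 : ℝ) < v ^ 3 := by positivity
        refine le_of_mul_le_mul_right (le_trans (le_of_eq ?_) h10) h12
        ring
      calc (2 * k : ℝ) ≤ 36 * v := by linarith
        _ ≤ 2500 / L * (M ^ 3 / 6) := by
            rw [div_mul_eq_mul_div, le_div_iff₀ hLpos]
            nlinarith
        _ ≤ _ := by gcongr
    exact_mod_cast h5.trans h4)
  set N : ℝ := (((Finset.range (⌊X⌋₊ + 1)).filter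
        fun m : ℕ => Squarefree m ∧ m.primeFactors ⊆ Q).card : ℝ) with hN
  have hkk : (0 : ℝ) < (k : ℝ) ^ k := by positivity
  have hfac : Real.exp 1 * (v ^ 5)⁻¹ * k ≤
      ((A.card : ℝ) ^ 3 / (512 * M ^ 2)) * (1250 / L) := by
    have h1 : 625 * (M : ℝ) ^ 2 / L ≤ A.card := by
      rw [div_le_iff₀ hLpos]
      linarith
    have h2 : (6 * v)⁻¹ ≤ M / L := by
      rw [inv_le_comm₀ (by positivity) (by positivity), inv_div, div_le_iff₀ hMr]
      exact hM1.le
    calc Real.exp 1 * (v ^ 5)⁻¹ * k ≤ 3 * (v ^ 5)⁻¹ * (18 * v) := by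
          gcongr
          have := Real.exp_one_lt_d9
          linarith
      _ = 54 * 1296 * ((6 * v)⁻¹) ^ 4 := by field_simp; norm_num
      _ ≤ 54 * 1296 * (M / L) ^ 4 := by gcongr
      _ ≤ (625 ^ 3 * 1250 / 512) * (M / L) ^ 4 := by gcongr; norm_num
      _ = ((625 * (M : ℝ) ^ 2 / L) ^ 3 / (512 * M ^ 2)) * (1250 / L) := by field_simp
      _ ≤ _ := by gcongr
  have hmain : (v ^ 5)⁻¹ ^ k * Real.exp T ≤ T * N := by
    have h1 : (k : ℝ) ^ k * ((v ^ 5)⁻¹ ^ k * Real.exp T) ≤ (k : ℝ) ^ k * (T * N) := by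
      calc (k : ℝ) ^ k * ((v ^ 5)⁻¹ ^ k * Real.exp T)
          = (Real.exp 1 * (v ^ 5)⁻¹ * k) ^ k * Real.exp (T - k) := by
            rw [Real.exp_sub, mul_pow, mul_pow, ← Real.exp_nat_mul, mul_one]
            field_simp
        _ ≤ (((A.card : ℝ) ^ 3 / (512 * M ^ 2)) * (1250 / L)) ^ k * Real.exp (T - k) := by
            gcongr
        _ = ((A.card : ℝ) ^ 3 / (512 * M ^ 2)) ^ k * (Real.exp (T - k) * (1250 / L) ^ k) := by
            rw [mul_pow]; ring
        _ ≤ (S.card * T) * (Real.exp (T - k) * (1250 / L) ^ k) := by gcongr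
        _ = T * (S.card * (Real.exp (T - k) * (1250 / L) ^ k)) := by ring
        _ ≤ T * ((k : ℝ) ^ k * N) := by gcongr
        _ = _ := by ring
    exact le_of_mul_le_mul_left h1 hkk
  have hlogv : 1 ≤ Real.log v := by
    rw [Real.le_log_iff_exp_le hvpos]
    have := Real.exp_one_lt_d9
    linarith
  calc X * v ^ (-(127 * v)) = Real.exp (Real.log X - 127 * v * Real.log v) := by
        rw [Real.exp_sub, Real.exp_log hX0, Real.rpow_def_of_pos hvpos, ← div_one (X * _),
          div_eq_div_iff (by norm_num) (by positivity), mul_assoc, ← Real.exp_add]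
        ring_nf
        simp
    _ ≤ Real.exp (T - 5 * k * Real.log v) := by
        apply Real.exp_le_exp.2
        have h1 : (k : ℝ) * Real.log v ≤ 18 * v * Real.log v := by gcongr
        nlinarith
    _ = (v ^ 5)⁻¹ ^ k * Real.exp T := by
        rw [Real.exp_sub, ← inv_pow, ← pow_mul, inv_pow, ← Real.exp_log (by positivity : 0 < v ^ (5 * k)),
          Real.log_pow]
        push_cast
        rw [div_eq_mul_inv, mul_comm]
    _ ≤ T * N := hmain
    _ ≤ L * N := by gcongr

/-! ### Small primes: Markov's inequality and the sieving product -/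

/-- The mean of `log ∏ s` over the subsets `s ⊆ S`, weighted by `1 / ∏ s`, is at most
`∑ log p / p`. -/
theorem sum_powerset_log_le (S : Finset ℕ) (hS : ∀ p ∈ S, p.Prime) :
    ∑ s ∈ S.powerset, (∏ p ∈ s, (1 / (p : ℝ))) * ∑ p ∈ s, Real.log p ≤
      (∏ p ∈ S, (1 + 1 / (p : ℝ))) * ∑ p ∈ S, Real.log p / p := by
  induction S using Finset.induction_on with
  | empty => simp
  | insert a S ha ih =>
    have ih' := ih (fun p hp => hS p (Finset.mem_insert_of_mem hp))
    rw [Finset.sum_powerset_insert ha, Finset.prod_insert ha, Finset.sum_insert ha]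
    have h1 : ∀ s ∈ S.powerset, (∏ p ∈ insert a s, (1 / (p : ℝ))) * ∑ p ∈ insert a s, Real.log p =
        1 / a * ((∏ p ∈ s, (1 / (p : ℝ))) * ∑ p ∈ s, Real.log p) +
          Real.log a / a * ∏ p ∈ s, (1 / (p : ℝ)) := by
      intro s hs
      have has : a ∉ s := fun h => ha (Finset.mem_powerset.1 hs h)
      rw [Finset.prod_insert has, Finset.sum_insert has]
      ring
    have h2 : ∑ s ∈ S.powerset, ∏ p ∈ s, (1 / (p : ℝ)) = ∏ p ∈ S, (1 + 1 / (p : ℝ)) :=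
      (Finset.prod_one_add S).symm
    rw [Finset.sum_congr rfl h1, Finset.sum_add_distrib, ← Finset.mul_sum, ← Finset.mul_sum, h2]
    set G := ∏ p ∈ S, (1 + 1 / (p : ℝ)) with hG
    set F := ∑ s ∈ S.powerset, (∏ p ∈ s, (1 / (p : ℝ))) * ∑ p ∈ s, Real.log p
    set H := ∑ p ∈ S, Real.log p / p
    have hG0 : 0 ≤ G := Finset.prod_nonneg fun p _ => by positivity
    have hl : 0 ≤ Real.log a / a := by
      have := Real.log_natCast_nonneg a
      positivity
    have hi : 0 ≤ 1 / (a : ℝ) := by positivity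
    have h3 : 1 / (a : ℝ) * F ≤ 1 / a * (G * H) := by gcongr
    have h4 : 0 ≤ 1 / (a : ℝ) * G * (Real.log a / a) := by positivity
    linarith

/-- Markov's inequality: at least half of the mass of `∏ (1 + 1 / p) = ∑ 1 / ∏ s` sits on the
subsets with `log ∏ s ≤ L / 2`, if all the primes have `log p ≤ l` with `l` small against `L`. -/
theorem half_mass_small (S : Finset ℕ) (hS : ∀ p ∈ S, p.Prime) (l L : ℝ) (hL : 0 < L)
    (hl : 0 ≤ l) (hSl : ∀ p ∈ S, Real.log p ≤ l) (hlL : 16 * (l + 1) ≤ L) :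
    (∏ p ∈ S, (1 + 1 / (p : ℝ))) / 2 ≤
      ∑ s ∈ S.powerset.filter (fun s : Finset ℕ => ∑ p ∈ s, Real.log p ≤ L / 2),
        ∏ p ∈ s, (1 / (p : ℝ)) := by
  set G := ∏ p ∈ S, (1 + 1 / (p : ℝ)) with hG
  have hG0 : 0 ≤ G := Finset.prod_nonneg fun p _ => by positivity
  have h2 : ∑ s ∈ S.powerset, ∏ p ∈ s, (1 / (p : ℝ)) = G := (Finset.prod_one_add S).symm
  have h3 : ∑ p ∈ S, Real.log p / p ≤ L / 4 := by
    have h4 := sum_log_div_le S hS (Finset.range (⌊l⌋₊ + 1)) (fun p hp => by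
      rw [Finset.mem_range, Nat.lt_succ_iff]
      exact Nat.floor_le_floor (hSl p hp))
    rw [Finset.card_range] at h4
    push_cast at h4
    have h5 := Nat.floor_le hl
    linarith
  have h6 := sum_powerset_log_le S hS
  have h7 : ∑ s ∈ S.powerset.filter (fun s : Finset ℕ => ¬ ∑ p ∈ s, Real.log p ≤ L / 2),
      (∏ p ∈ s, (1 / (p : ℝ))) * (L / 2) ≤ G * (L / 4) := by
    calc _ ≤ ∑ s ∈ S.powerset.filter (fun s : Finset ℕ => ¬ ∑ p ∈ s, Real.log p ≤ L / 2),
          (∏ p ∈ s, (1 / (p : ℝ))) * ∑ p ∈ s, Real.log p := by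
          apply Finset.sum_le_sum
          intro s hs
          have := (not_le.1 (Finset.mem_filter.1 hs).2).le
          have h0 : 0 ≤ ∏ p ∈ s, (1 / (p : ℝ)) := Finset.prod_nonneg fun p _ => by positivity
          gcongr
      _ ≤ ∑ s ∈ S.powerset, (∏ p ∈ s, (1 / (p : ℝ))) * ∑ p ∈ s, Real.log p := by
          apply Finset.sum_le_sum_of_subset_of_nonneg (Finset.filter_subset _ _)
          intro s _ _
          exact mul_nonneg (Finset.prod_nonneg fun p _ => by positivity)
            (Finset.sum_nonneg fun p _ => Real.log_natCast_nonneg p)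
      _ ≤ G * ∑ p ∈ S, Real.log p / p := h6
      _ ≤ _ := by gcongr
  rw [← Finset.sum_mul] at h7
  rw [← Finset.sum_filter_add_sum_filter_not _
    (fun s : Finset ℕ => ∑ p ∈ s, Real.log p ≤ L / 2)] at h2
  nlinarith

theorem sum_inv_sq_le_two (N : ℕ) : ∑ m ∈ Finset.Icc 1 N, 1 / (m : ℝ) ^ 2 ≤ 2 := by
  have h := sum_Ioo_inv_sq_le (α := ℝ) 0 (N + 1)
  have : Finset.Ioo 0 (N + 1) = Finset.Icc 1 N := by ext; simp; omega
  rw [this] at h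
  simpa using h

/-- Mertens' lower bound: writing `n = b² a` with `a` square-free,
`log (N + 1) ≤ ∑ 1 / n ≤ ∑ 1 / b² · ∏ (1 + 1 / p)`. -/
theorem log_le_two_mul_prod (N : ℕ) :
    Real.log (N + 1) ≤
      2 * ∏ p ∈ (Finset.range (N + 1)).filter Nat.Prime, (1 + 1 / (p : ℝ)) := by
  have hex : ∀ n : ℕ, ∃ a b : ℕ, b ^ 2 * a = n ∧ Squarefree a := Nat.sq_mul_squarefree
  choose a b hab hsq using hex
  set R := (Finset.range (N + 1)).filter Nat.Prime with hR
  set F : Finset ℕ × ℕ → ℝ := fun z => (∏ p ∈ z.1, (1 / (p : ℝ))) * (1 / (z.2 : ℝ) ^ 2) with hF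
  have hFn : ∀ n : ℕ, (1 / (n : ℝ)) = F ((a n).primeFactors, b n) := by
    intro n
    have h1 : (∏ p ∈ (a n).primeFactors, (p : ℝ)) = a n := by
      rw [← Nat.cast_prod, Nat.prod_primeFactors_of_squarefree (hsq n)]
    have h2 : ((b n : ℝ)) ^ 2 * a n = n := by exact_mod_cast hab n
    simp only [hF]
    rw [Finset.prod_div_distrib, h1, ← h2]
    simp [mul_comm]
  have hinj : Set.InjOn (fun n => ((a n).primeFactors, b n)) (Finset.Icc 1 N : Finset ℕ) := by
    intro n _ m _ h
    simp only [Prod.mk.injEq] at h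
    rw [← hab n, ← hab m, ← Nat.prod_primeFactors_of_squarefree (hsq n),
      ← Nat.prod_primeFactors_of_squarefree (hsq m), h.1, h.2]
  calc Real.log (N + 1) ≤ ((harmonic N : ℚ) : ℝ) := by exact_mod_cast log_add_one_le_harmonic N
    _ = ∑ n ∈ Finset.Icc 1 N, (1 / (n : ℝ)) := by
        rw [harmonic_eq_sum_Icc]; push_cast; simp
    _ = ∑ n ∈ Finset.Icc 1 N, F ((a n).primeFactors, b n) := Finset.sum_congr rfl fun n _ => hFn n
    _ = ∑ z ∈ (Finset.Icc 1 N).image (fun n => ((a n).primeFactors, b n)), F z :=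
        (Finset.sum_image hinj).symm
    _ ≤ ∑ z ∈ R.powerset ×ˢ Finset.Icc 1 N, F z := by
        apply Finset.sum_le_sum_of_subset_of_nonneg
        · intro z hz
          obtain ⟨n, hn, rfl⟩ := Finset.mem_image.1 hz
          rw [Finset.mem_Icc] at hn
          have hb0 : b n ≠ 0 := by
            intro h
            have := hab n
            rw [h] at this
            simp at this
            omega
          have ha0 : a n ≠ 0 := (hsq n).ne_zero
          have hbn : b n ≤ n := by
            calc b n ≤ b n ^ 2 := Nat.le_self_pow (by norm_num) _
              _ ≤ b n ^ 2 * a n := Nat.le_mul_of_pos_right _ (by omega)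
              _ = n := hab n
          have han : a n ≤ n := by
            calc a n ≤ b n ^ 2 * a n := Nat.le_mul_of_pos_left _ (by positivity)
              _ = n := hab n
          rw [Finset.mem_product, Finset.mem_powerset, Finset.mem_Icc]
          refine ⟨?_, by omega, by omega⟩
          intro p hp
          have h1 := Nat.le_of_mem_primeFactors hp
          rw [hR, Finset.mem_filter, Finset.mem_range]
          exact ⟨by omega, Nat.prime_of_mem_primeFactors hp⟩
        · intro z _ _
          exact mul_nonneg (Finset.prod_nonneg fun p _ => by positivity) (by positivity)
    _ = (∑ s ∈ R.powerset, ∏ p ∈ s, (1 / (p : ℝ))) * ∑ m ∈ Finset.Icc 1 N, 1 / (m : ℝ) ^ 2 := by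
        rw [Finset.sum_mul_sum, Finset.sum_product]
    _ = (∏ p ∈ R, (1 + 1 / (p : ℝ))) * ∑ m ∈ Finset.Icc 1 N, 1 / (m : ℝ) ^ 2 := by
        rw [Finset.prod_one_add]
    _ ≤ (∏ p ∈ R, (1 + 1 / (p : ℝ))) * 2 := by
        have : 0 ≤ ∏ p ∈ R, (1 + 1 / (p : ℝ)) := Finset.prod_nonneg fun p _ => by positivity
        gcongr
        exact sum_inv_sq_le_two N
    _ = _ := mul_comm _ _

/-- The sieving product is controlled by the product over the small primes of `P`, by
Mertens' lower bound for the product over all `p ≤ y`, since `(1 - 1 / p) (1 + 1 / p) ≤ 1` for the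
primes `p ≤ y` outside `P`. -/
theorem sieve_product_le (x y : ℝ) (hy1 : 1 ≤ y) (hyx : y ≤ x) (P : Finset ℕ)
    (hP : ∀ p ∈ P, p.Prime) :
    Real.log y * ∏ p ∈ (Finset.range (⌊x⌋₊ + 1)).filter (fun p : ℕ => p.Prime ∧ p ∉ P),
        (1 - 1 / (p : ℝ)) ≤
      2 * ∏ p ∈ P.filter (fun p : ℕ => ¬ y < (p : ℝ)), (1 + 1 / (p : ℝ)) := by
  set D := (Finset.range (⌊x⌋₊ + 1)).filter (fun p : ℕ => p.Prime ∧ p ∉ P) with hD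
  set S := P.filter (fun p : ℕ => ¬ y < (p : ℝ)) with hS
  set R := (Finset.range (⌊y⌋₊ + 1)).filter (fun p : ℕ => p.Prime ∧ p ∉ P) with hR
  have hfac : ∀ p : ℕ, p.Prime → 0 ≤ 1 - 1 / (p : ℝ) ∧ 1 - 1 / (p : ℝ) ≤ 1 := by
    intro p hp
    have hp1 : (1 : ℝ) ≤ p := by exact_mod_cast hp.one_le
    have h1 : 1 / (p : ℝ) ≤ 1 := by rw [div_le_one (by linarith)]; exact hp1
    have h2 : 0 ≤ 1 / (p : ℝ) := by positivity
    constructor <;> linarith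
  have hDpr : ∀ p ∈ D, p.Prime := fun p hp => (Finset.mem_filter.1 hp).2.1
  have hRpr : ∀ p ∈ R, p.Prime := fun p hp => (Finset.mem_filter.1 hp).2.1
  have hRD : R ⊆ D := by
    apply Finset.filter_subset_filter
    apply Finset.range_subset_range.2
    have := Nat.floor_le_floor hyx
    omega
  have hDR : ∏ p ∈ D, (1 - 1 / (p : ℝ)) ≤ ∏ p ∈ R, (1 - 1 / (p : ℝ)) := by
    rw [← Finset.prod_sdiff hRD]
    apply mul_le_of_le_one_left (Finset.prod_nonneg fun p hp => (hfac p (hRpr p hp)).1)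
    apply Finset.prod_le_one
    · intro p hp
      exact (hfac p (hDpr p (Finset.sdiff_subset hp))).1
    · intro p hp
      exact (hfac p (hDpr p (Finset.sdiff_subset hp))).2
  have hD0 : 0 ≤ ∏ p ∈ D, (1 - 1 / (p : ℝ)) :=
    Finset.prod_nonneg fun p hp => (hfac p (hDpr p hp)).1
  have hsplit : (Finset.range (⌊y⌋₊ + 1)).filter Nat.Prime = S ∪ R := by
    ext p
    simp only [hS, hR, Finset.mem_filter, Finset.mem_range, Finset.mem_union, Nat.lt_succ_iff,
      not_lt, Nat.le_floor_iff (by linarith : 0 ≤ y)]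
    constructor
    · rintro ⟨h1, h2⟩
      by_cases hpP : p ∈ P
      · exact Or.inl ⟨hpP, h1⟩
      · exact Or.inr ⟨h1, h2, hpP⟩
    · rintro (⟨h1, h2⟩ | ⟨h1, h2, -⟩)
      · exact ⟨h2, hP p h1⟩
      · exact ⟨h1, h2⟩
  have hdisj : Disjoint S R := by
    rw [Finset.disjoint_left]
    intro p hp hp'
    exact (Finset.mem_filter.1 hp').2.2 (Finset.mem_filter.1 hp).1
  have hlog := log_le_two_mul_prod ⌊y⌋₊
  rw [hsplit, Finset.prod_union hdisj] at hlog
  have hlogy : Real.log y ≤ Real.log (⌊y⌋₊ + 1) :=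
    Real.log_le_log (by linarith) (Nat.lt_floor_add_one y).le
  have hS0 : 0 ≤ ∏ p ∈ S, (1 + 1 / (p : ℝ)) := Finset.prod_nonneg fun p _ => by positivity
  have hR0 : 0 ≤ ∏ p ∈ R, (1 + 1 / (p : ℝ)) := Finset.prod_nonneg fun p _ => by positivity
  have hRR : (∏ p ∈ R, (1 + 1 / (p : ℝ))) * ∏ p ∈ R, (1 - 1 / (p : ℝ)) ≤ 1 := by
    rw [← Finset.prod_mul_distrib]
    apply Finset.prod_le_one
    · intro p hp
      exact mul_nonneg (by positivity) (hfac p (hRpr p hp)).1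
    · intro p hp
      have : (0 : ℝ) ≤ (1 / (p : ℝ)) ^ 2 := by positivity
      linarith
  calc Real.log y * ∏ p ∈ D, (1 - 1 / (p : ℝ))
      ≤ (2 * ((∏ p ∈ S, (1 + 1 / (p : ℝ))) * ∏ p ∈ R, (1 + 1 / (p : ℝ)))) *
          ∏ p ∈ R, (1 - 1 / (p : ℝ)) := by
        apply mul_le_mul (hlogy.trans hlog) hDR hD0
        positivity
    _ = 2 * (∏ p ∈ S, (1 + 1 / (p : ℝ))) *
          ((∏ p ∈ R, (1 + 1 / (p : ℝ))) * ∏ p ∈ R, (1 - 1 / (p : ℝ))) := by ring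
    _ ≤ 2 * (∏ p ∈ S, (1 + 1 / (p : ℝ))) * 1 := by gcongr
    _ = _ := mul_one _

/-! ### Combination of small and large primes -/

/-- Multiplying a product of primes of `S` by a product of primes of `Q` gives distinct
square-free numbers composed of primes of `P`, when `S` and `Q` are disjoint. -/
theorem sum_card_le (x : ℝ) (hx : 0 < x) (P S Q : Finset ℕ) (hS : S ⊆ P) (hQ : Q ⊆ P)
    (hdisj : Disjoint S Q) (hP : ∀ p ∈ P, p.Prime) (Y : Finset (Finset ℕ)) (hY : ∀ s ∈ Y, s ⊆ S) :
    ∑ s ∈ Y, ((Finset.range (⌊x * ∏ p ∈ s, (1 / (p : ℝ))⌋₊ + 1)).filter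
        fun m : ℕ => Squarefree m ∧ m.primeFactors ⊆ Q).card ≤
      ((Finset.range (⌊x⌋₊ + 1)).filter
        fun n : ℕ => Squarefree n ∧ n.primeFactors ⊆ P).card := by
  rw [← Finset.card_sigma]
  have hpf : ∀ s ∈ Y, (∏ p ∈ s, p).primeFactors = s := fun s hs =>
    Nat.primeFactors_prod fun p hp => hP p (hS (hY s hs hp))
  have hpos : ∀ s ∈ Y, 0 < ∏ p ∈ s, p := fun s hs =>
    Finset.prod_pos fun p hp => (hP p (hS (hY s hs hp))).pos
  have hpfmul : ∀ s ∈ Y, ∀ m : ℕ, Squarefree m →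
      ((∏ p ∈ s, p) * m).primeFactors = s ∪ m.primeFactors := by
    intro s hs m hm
    rw [Nat.primeFactors_mul (hpos s hs).ne' hm.ne_zero, hpf s hs]
  apply Finset.card_le_card_of_injOn
    (fun z : (_ : Finset ℕ) × ℕ => (∏ p ∈ z.1, p) * z.2)
  · rintro ⟨s, m⟩ hz
    rw [Finset.mem_coe, Finset.mem_sigma, Finset.mem_filter, Finset.mem_range,
      Nat.lt_succ_iff] at hz
    obtain ⟨hs, hm, hsq, hmQ⟩ := hz
    simp only at hs hm hsq hmQ ⊢
    rw [Finset.mem_coe, Finset.mem_filter, Finset.mem_range, Nat.lt_succ_iff]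
    refine ⟨?_, ?_, ?_⟩
    · have h0 : 0 ≤ ∏ p ∈ s, (1 / (p : ℝ)) := Finset.prod_nonneg fun p _ => by positivity
      have h1 : (m : ℝ) ≤ x * ∏ p ∈ s, (1 / (p : ℝ)) := (Nat.le_floor_iff (by positivity)).1 hm
      apply Nat.le_floor
      have h2 : (0 : ℝ) < ∏ p ∈ s, (p : ℝ) :=
        Finset.prod_pos fun p hp => by exact_mod_cast (hP p (hS (hY s hs hp))).pos
      rw [Finset.prod_div_distrib, Finset.prod_const_one, mul_one_div, le_div_iff₀ h2] at h1
      push_cast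
      linarith
    · rw [Nat.squarefree_mul_iff]
      refine ⟨?_, ?_, hsq⟩
      · rw [← Nat.disjoint_primeFactors (hpos s hs).ne' hsq.ne_zero, hpf s hs]
        exact Finset.disjoint_of_subset_left (hY s hs) (Finset.disjoint_of_subset_right hmQ hdisj)
      · apply Finset.squarefree_prod_of_pairwise_isCoprime
        · intro p hp q hq hpq
          exact Nat.coprime_iff_isRelPrime.1
            ((Nat.coprime_primes (hP p (hS (hY s hs hp))) (hP q (hS (hY s hs hq)))).2 hpq)
        · intro p hp
          exact (hP p (hS (hY s hs hp))).prime.squarefree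
    · rw [hpfmul s hs m hsq]
      exact Finset.union_subset ((hY s hs).trans hS) (hmQ.trans hQ)
  · rintro ⟨s, m⟩ hz ⟨s', m'⟩ hz' h
    rw [Finset.mem_coe, Finset.mem_sigma, Finset.mem_filter] at hz hz'
    obtain ⟨hs, -, hsq, hmQ⟩ := hz
    obtain ⟨hs', -, hsq', hmQ'⟩ := hz'
    simp only at hs hsq hmQ hs' hsq' hmQ' h
    have key : ∀ (t : Finset ℕ) (r : ℕ), t ⊆ S → r.primeFactors ⊆ Q →
        (t ∪ r.primeFactors) ∩ S = t := by
      intro t r ht hr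
      have h1 : r.primeFactors ∩ S = ∅ := by
        rw [← Finset.disjoint_iff_inter_eq_empty]
        exact (Finset.disjoint_of_subset_right hr hdisj).symm
      rw [Finset.union_inter_distrib_right, h1, Finset.union_empty,
        Finset.inter_eq_left.2 ht]
    -- `s` is recovered from the product as the set of its prime factors in `S`
    have hss : s = s' := by
      rw [← key s m (hY s hs) hmQ, ← key s' m' (hY s' hs') hmQ', ← hpfmul s hs m hsq,
        ← hpfmul s' hs' m' hsq', h]
    subst hss
    have hmm : m = m' := Nat.eq_of_mul_eq_mul_left (hpos s hs) h
    subst hmm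
    rfl

theorem card_squarefree_le (x : ℝ) (P : Finset ℕ) :
    (((Finset.range (⌊x⌋₊ + 1)).filter
        fun n : ℕ => Squarefree n ∧ n.primeFactors ⊆ P).card : ℝ) ≤
      ∑ n ∈ (Finset.range (⌊x⌋₊ + 1)).filter (fun n : ℕ => ∀ p : ℕ, p.Prime → p ∣ n → p ∈ P),
        |((ArithmeticFunction.moebius n : ℤ) : ℝ)| := by
  rw [Finset.card_eq_sum_ones, Nat.cast_sum]
  calc _ = ∑ n ∈ (Finset.range (⌊x⌋₊ + 1)).filter
        (fun n : ℕ => Squarefree n ∧ n.primeFactors ⊆ P),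
          |((ArithmeticFunction.moebius n : ℤ) : ℝ)| := by
        apply Finset.sum_congr rfl
        intro n hn
        have hsq := (Finset.mem_filter.1 hn).2.1
        have h1 := ArithmeticFunction.abs_moebius_eq_one_of_squarefree hsq
        rw [← Int.cast_abs, h1]
        simp
    _ ≤ _ := by
        apply Finset.sum_le_sum_of_subset_of_nonneg
        · intro n hn
          rw [Finset.mem_filter] at hn ⊢
          refine ⟨hn.1, fun p hp hpn => hn.2.2 ?_⟩
          exact Nat.mem_primeFactors.2 ⟨hp, hpn, hn.2.1.ne_zero⟩
        · intro _ _ _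
          positivity

/-- **A sieve lower bound (after Granville–Koukoulopoulos–Matomäki).** There are constants
`λ, c > 0` such that if `x ≥ 10`, `𝒫` is a set of primes `≤ x`, and `v ∈ [1, c√(log x)]`
satisfies `∑_{p ∈ 𝒫, x^(1/(ev)) < p ≤ x} 1/p ≥ 1 + λ`, then
`(1/x) ∑_{n ≤ x, p | n → p ∈ 𝒫} |μ(n)| ≥ c · v^(-v/c) · ∏_{p ≤ x, p ∉ 𝒫} (1 - 1/p)`. -/
theorem sieve_squarefree_lower :
    ∃ lam c : ℝ, 0 < lam ∧ 0 < c ∧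
      ∀ x : ℝ, 10 ≤ x →
        ∀ P : Finset ℕ, (∀ p ∈ P, Nat.Prime p ∧ (p : ℝ) ≤ x) →
          ∀ v : ℝ, 1 ≤ v → v ≤ c * Real.sqrt (Real.log x) →
            1 + lam ≤ (∑ p ∈ P.filter (fun p : ℕ => x ^ (1 / (Real.exp 1 * v)) < (p : ℝ)),
              (1 : ℝ) / (p : ℝ)) →
            c * v ^ (-(v / c)) *
                ∏ p ∈ (Finset.range (⌊x⌋₊ + 1)).filter (fun p : ℕ => p.Prime ∧ p ∉ P),
                  (1 - 1 / (p : ℝ)) ≤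
              (1 / x) * ∑ n ∈ (Finset.range (⌊x⌋₊ + 1)).filter
                  (fun n : ℕ => ∀ p : ℕ, p.Prime → p ∣ n → p ∈ P),
                |((ArithmeticFunction.moebius n : ℤ) : ℝ)| := by
  refine ⟨10000, 1 / 200, by norm_num, by norm_num, ?_⟩
  intro x hx P hP v hv1 hv2 hmass
  set L := Real.log x with hLdef
  have hxpos : 0 < x := by linarith
  have hLpos : 0 < L := Real.log_pos (by linarith)
  have hvpos : 0 < v := by linarith
  have hPp : ∀ p ∈ P, p.Prime := fun p hp => (hP p hp).1
  have hvL : 10000 * v ^ 2 ≤ L := by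
    have h1 : v ^ 2 ≤ (1 / 200 * Real.sqrt L) ^ 2 := by gcongr
    rw [mul_pow, Real.sq_sqrt hLpos.le] at h1
    linarith
  have he1 := Real.exp_one_gt_d9
  have he2 := Real.exp_one_lt_d9
  have hev : 0 < Real.exp 1 * v := by positivity
  set y := x ^ (1 / (Real.exp 1 * v)) with hy
  have hy1 : 1 ≤ y := Real.one_le_rpow (by linarith) (by positivity)
  have hyx : y ≤ x := by
    calc y ≤ x ^ (1 : ℝ) := by
          apply Real.rpow_le_rpow_of_exponent_le (by linarith)
          rw [div_le_one hev]
          nlinarith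
      _ = x := Real.rpow_one x
  have hlogy : Real.log y = L / (Real.exp 1 * v) := by
    rw [hy, Real.log_rpow hxpos]
    ring
  set Q := P.filter (fun p : ℕ => y < (p : ℝ)) with hQ
  set S := P.filter (fun p : ℕ => ¬ y < (p : ℝ)) with hS
  have hQp : ∀ p ∈ Q, p.Prime := fun p hp => hPp p (Finset.mem_filter.1 hp).1
  have hSp : ∀ p ∈ S, p.Prime := fun p hp => hPp p (Finset.mem_filter.1 hp).1
  have hQL : ∀ p ∈ Q, L < 3 * v * Real.log p ∧ Real.log p ≤ L := by
    intro p hp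
    have hp' := Finset.mem_filter.1 hp
    have hp0 : (0 : ℝ) < p := by exact_mod_cast (hQp p hp).pos
    refine ⟨?_, Real.log_le_log hp0 (hP p hp'.1).2⟩
    have h1 : Real.log y < Real.log p := Real.log_lt_log (by linarith) hp'.2
    rw [hlogy, div_lt_iff₀ hev] at h1
    have h2 : 0 < Real.log p := by
      by_contra! hcon
      have := mul_nonpos_of_nonpos_of_nonneg hcon hev.le
      linarith
    have h3 : Real.log p * (Real.exp 1 * v) ≤ Real.log p * (3 * v) := by
      gcongr
      linarith
    linarith
  have hmass' : 10000 ≤ ∑ p ∈ Q, (1 : ℝ) / p := by linarith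
  -- the dyadic block found has mass between `5000 M / L` and `4`, while `M > L / (6 v)`
  have hv208 : 208 ≤ v := by
    obtain ⟨M, A, -, h1, h2, -, -⟩ :=
      exists_dense_block L v (by nlinarith) hv1 (by nlinarith) Q hQp hQL hmass'
    by_contra! hcon
    have hM0 : (0 : ℝ) ≤ M := by positivity
    nlinarith
  set G := ∏ p ∈ S, (1 + 1 / (p : ℝ)) with hG
  set D := ∏ p ∈ (Finset.range (⌊x⌋₊ + 1)).filter (fun p : ℕ => p.Prime ∧ p ∉ P),
    (1 - 1 / (p : ℝ)) with hD
  set Z := ∑ n ∈ (Finset.range (⌊x⌋₊ + 1)).filter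
    (fun n : ℕ => ∀ p : ℕ, p.Prime → p ∣ n → p ∈ P),
      |((ArithmeticFunction.moebius n : ℤ) : ℝ)| with hZ
  have hDG : L / (Real.exp 1 * v) * D ≤ 2 * G := by
    have := sieve_product_le x y hy1 hyx P hPp
    rwa [hlogy] at this
  have hD0 : 0 ≤ D := by
    apply Finset.prod_nonneg
    intro p hp
    have hp1 : (1 : ℝ) ≤ p := by exact_mod_cast (Finset.mem_filter.1 hp).2.1.one_le
    have h1 : 1 / (p : ℝ) ≤ 1 := by rw [div_le_one (by linarith)]; exact hp1
    linarith
  set Y := S.powerset.filter (fun s : Finset ℕ => ∑ p ∈ s, Real.log p ≤ L / 2) with hY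
  have hhalf : G / 2 ≤ ∑ s ∈ Y, ∏ p ∈ s, (1 / (p : ℝ)) := by
    apply half_mass_small S hSp (L / (Real.exp 1 * v)) L hLpos (by positivity)
    · intro p hp
      rw [← hlogy]
      exact Real.log_le_log (by exact_mod_cast (hSp p hp).pos)
        (not_lt.1 (Finset.mem_filter.1 hp).2)
    · have h1 : L / (Real.exp 1 * v) ≤ L / 208 := by
        gcongr
        nlinarith
      nlinarith
  have hSQ : Disjoint S Q := by
    rw [Finset.disjoint_left]
    intro p hp hp'
    exact (Finset.mem_filter.1 hp).2 (Finset.mem_filter.1 hp').2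
  have hcount : ∑ s ∈ Y, (∏ p ∈ s, (1 / (p : ℝ))) * (x * v ^ (-(127 * v))) ≤ L * Z := by
    have h1 := sum_card_le x hxpos P S Q (Finset.filter_subset _ _) (Finset.filter_subset _ _)
      hSQ hPp Y (fun s hs => Finset.mem_powerset.1 (Finset.mem_filter.1 hs).1)
    have h2 := (Nat.cast_le (α := ℝ).2 h1).trans (card_squarefree_le x P)
    rw [← hZ] at h2
    refine le_trans ?_ (mul_le_mul_of_nonneg_left h2 hLpos.le)
    push_cast
    rw [Finset.mul_sum]
    apply Finset.sum_le_sum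
    intro s hs
    rw [hY, Finset.mem_filter, Finset.mem_powerset] at hs
    have hsp : ∀ p ∈ s, (0 : ℝ) < p := fun p hp => by exact_mod_cast (hSp p (hs.1 hp)).pos
    have h3 : 0 < ∏ p ∈ s, (1 / (p : ℝ)) :=
      Finset.prod_pos fun p hp => one_div_pos.2 (hsp p hp)
    have h4 : Real.log (x * ∏ p ∈ s, (1 / (p : ℝ))) = L - ∑ p ∈ s, Real.log p := by
      rw [Real.log_mul hxpos.ne' h3.ne',
        Real.log_prod (fun p hp => (one_div_pos.2 (hsp p hp)).ne')]
      simp [Finset.sum_neg_distrib, hLdef, sub_eq_add_neg]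
    have h5 : 0 ≤ ∑ p ∈ s, Real.log p := Finset.sum_nonneg fun p _ => Real.log_natCast_nonneg p
    have h6 := many_products L v (x * ∏ p ∈ s, (1 / (p : ℝ))) hv1 hvL (by positivity)
      (by rw [h4]; linarith [hs.2]) (by rw [h4]; linarith) Q hQp hQL hmass'
    refine le_trans (le_of_eq (by ring)) h6
  rw [← Finset.sum_mul] at hcount
  have hvp : 0 < v ^ (-(127 * v)) := Real.rpow_pos_of_pos hvpos _
  have hpow : v ^ (-(v / (1 / 200))) ≤ v ^ (-(127 * v)) * v⁻¹ := by
    rw [← Real.rpow_neg_one v, ← Real.rpow_add hvpos]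
    apply Real.rpow_le_rpow_of_exponent_le hv1
    linarith
  have hmain : G / 2 * (x * v ^ (-(127 * v))) ≤ L * Z := by
    refine le_trans ?_ hcount
    gcongr
  have hDG2 : L * D ≤ 2 * G * (Real.exp 1 * v) := by
    rw [div_mul_eq_mul_div, div_le_iff₀ hev] at hDG
    exact hDG
  rw [one_div x, inv_mul_eq_div, le_div_iff₀ hxpos]
  apply le_of_mul_le_mul_left _ hLpos
  calc L * (1 / 200 * v ^ (-(v / (1 / 200))) * D * x)
      ≤ L * (1 / 200 * (v ^ (-(127 * v)) * v⁻¹) * D * x) := by gcongr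
    _ = (L * D) * (1 / 200 * (v ^ (-(127 * v)) * v⁻¹) * x) := by ring
    _ ≤ (2 * G * (Real.exp 1 * v)) * (1 / 200 * (v ^ (-(127 * v)) * v⁻¹) * x) := by gcongr
    _ = Real.exp 1 * (G / 2 * (x * v ^ (-(127 * v)))) / 50 := by field_simp; ring
    _ ≤ G / 2 * (x * v ^ (-(127 * v))) := by
        have hG0 : 0 ≤ G := Finset.prod_nonneg fun p _ => by positivity
        have : 0 ≤ G / 2 * (x * v ^ (-(127 * v))) := by positivity
        nlinarith
    _ ≤ L * Z := hmain
end
end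

section
/- There exists ε₀ > 0 such that for every ε ∈ (0, ε₀) there is q₀(ε) with the following property. Let q ≥ q₀ be a natural number and let A₁, A₂, A₃ ⊆ (ℤ/qℤ)^× with |A₁|, |A₂|, |A₃| > (2/5 + ε)·φ(q). Then at least one of the following holds: (a) for every a ∈ (ℤ/qℤ)^×, (1_{A₁} ∗ 1_{A₂} ∗ 1_{A₃})(a) ≥ (1/500)·ε²·φ(q)²; (b) there exist a subgroup H ≤ (ℤ/qℤ)^× of index 2 and elements a_i ∈ A_i for i ∈ {1,2,3} such that |A_i ∩ a_iH| ≥ |A_i| − (ε/2)·φ(q) for each i, and (1_{A₁} ∗ 1_{A₂} ∗ 1_{A₃})(a) ≥ (1/25)·φ(q)² for every a ∈ a₁a₂a₃H. -/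
/-!
The argument takes place in an arbitrary finite abelian group `G` of order `N`; largeness of `q`
plays no role. Suppose that (a) fails: some `a` has fewer than `ε² N² / 500` representations
`x y z = a`. With `D = a / A₃` this says that few pairs `(x, y) ∈ A₁ × A₂` have `x y ∈ D`, while
the three densities exceed `2/5 + ε`. The substitute for a robust form of Kneser's theorem is as
follows.

* *Dyson transform* (`exists_extremal`). Replacing `(A, B)` by `(A ∪ eB, B ∩ e⁻¹A)` preserves
  `|A| + |B|` and does not increase the number of pairs with product in `D`. Iterate as long as
  `|B|` drops but stays above `t = ε² N / 50`. In the terminal pair, every translate `eB` is either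
  contained in `A` or meets it in at most `t` points. Counting pairs gives `|A| ≤ 3N/5` and
  `|B| > N/5` (`extremal_bounds`).
* *Core* (`card_mul_card_le_core`). The set `E` of all `e` with `eB ⊆ A` has at least `|A| - 5t`
  elements. Since `Eb` and `Eb'` both lie in `A`, translating `E` by any element of `B / B` moves at
  most `5t` of its elements.
* *Subgroup* (`exists_subgroup`). As `|B| > N/5`, the powers of `B / B` stabilise by the seventh, so
  they reach a subgroup `H` of index at most `4`, containing `B` in a coset, and `E` is moved by at
  most `35t` elements under each `h ∈ H`. Hence `E` nearly fills or nearly avoids each coset of `H`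
  (`coset_dichotomy`), and `|A|` is nearly a multiple of `|H|`. The inequalities
  `|A| + |B| ≥ (4/5 + 2ε) N`, `|B| ≤ |H|` and `2N/5 ≤ |A| ≤ 3N/5` then leave only index `2`
  (`index_eq_two_of_bounds`).

Therefore `A`, and with it `A₁ ⊆ A`, is contained in one coset of `H` up to `O(ε² N)` elements. The
pigeonhole bound `triples_ge` transfers this to `A₂` and `A₃`, and also yields the lower bound on
the representation function on the coset `a₁a₂a₃H`.
-/


open scoped BigOperators Classical

noncomputable section

/-- The triple convolution `(1_{A₁} ∗ 1_{A₂} ∗ 1_{A₃})(a) = #{(x,y,z) ∈ A₁×A₂×A₃ : xyz = a}`. -/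
def conv3 (q : ℕ) (A₁ A₂ A₃ : Finset ((ZMod q)ˣ)) (a : (ZMod q)ˣ) : ℕ :=
  Set.ncard {t : ((ZMod q)ˣ) × ((ZMod q)ˣ) × ((ZMod q)ˣ) |
    t.1 ∈ A₁ ∧ t.2.1 ∈ A₂ ∧ t.2.2 ∈ A₃ ∧ t.1 * t.2.1 * t.2.2 = a}


open scoped Pointwise
open Finset

section Group

/-! ### Dyson transforms and the extremal pair -/

variable {G : Type*} [CommGroup G]

/-- The number of pairs in `A × B` whose product lies in `D`. -/
def sol (A B D : Finset G) : ℕ := #{p ∈ A ×ˢ B | p.1 * p.2 ∈ D}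

/-- The injection fixes the pairs `(x, y)` with `x ∈ A`, and sends a pair with `x ∈ eB \ A` to
`(e y, e⁻¹ x)`, which is not of the first kind because `x ∉ A`. -/
lemma sol_dyson_le (A B D : Finset G) (e : G) :
    sol (mulDysonETransform e (A, B)).1 (mulDysonETransform e (A, B)).2 D ≤ sol A B D := by
  unfold sol
  refine card_le_card_of_injOn
    (fun p => if p.1 ∈ A then p else (e * p.2, e⁻¹ * p.1)) ?_ ?_
  · rintro ⟨x, y⟩ h
    simp only [mulDysonETransform, coe_filter, mem_product, mem_union, mem_inter,
      mem_smul_finset, Set.mem_ofPred_eq, smul_eq_mul] at h ⊢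
    obtain ⟨⟨hx, hy, z, hz, rfl⟩, hD⟩ := h
    by_cases hA : x ∈ A
    · simp_all
    · obtain ⟨w, hw, rfl⟩ := hx.resolve_left hA
      simp only [hA, if_false]
      refine ⟨⟨by simpa using hz, by simpa using hw⟩, ?_⟩
      convert hD using 1
      simp only [mul_inv_cancel_left, inv_mul_cancel_left]
      rw [mul_comm e w, mul_assoc, mul_inv_cancel_left, mul_comm]
  · rintro ⟨x, y⟩ h ⟨x', y'⟩ h' heq
    simp only [mulDysonETransform, coe_filter, mem_product, mem_union, mem_inter,
      mem_smul_finset, Set.mem_ofPred_eq, smul_eq_mul] at h h' heq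
    by_cases hA : x ∈ A <;> by_cases hA' : x' ∈ A <;> simp only [hA, hA', if_true, if_false] at heq
    · exact heq
    · obtain ⟨z, hz, hzy⟩ := h.1.2.2
      simp only [Prod.mk.injEq] at heq
      exfalso; apply hA'
      have : z = x' := by rw [heq.2] at hzy; exact mul_left_cancel hzy
      exact this ▸ hz
    · obtain ⟨z, hz, hzy⟩ := h'.1.2.2
      simp only [Prod.mk.injEq] at heq
      exfalso; apply hA
      have : z = x := by rw [← heq.2] at hzy; exact mul_left_cancel hzy
      exact this ▸ hz
    · simp only [Prod.mk.injEq, mul_right_inj] at heq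
      simp [heq]

/-- Dyson transforms that keep the second set larger than `t` and shrink it strictly can be applied
only finitely often; the pair `(A, B)` is the one at which they stop. -/
lemma exists_extremal (D : Finset G) (t : ℝ) (n : ℕ) : ∀ A₀ B₀ : Finset G, #B₀ = n → t < #B₀ →
    ∃ A B : Finset G, A₀ ⊆ A ∧ #A + #B = #A₀ + #B₀ ∧ t < #B ∧ sol A B D ≤ sol A₀ B₀ D ∧
      ∀ e, (#{b ∈ B | e * b ∈ A} : ℝ) ≤ t ∨ ∀ b ∈ B, e * b ∈ A := by
  induction n using Nat.strong_induction_on with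
  | _ n ih =>
  intro A₀ B₀ hn ht
  by_cases h : ∀ e, (#{b ∈ B₀ | e * b ∈ A₀} : ℝ) ≤ t ∨ ∀ b ∈ B₀, e * b ∈ A₀
  · exact ⟨A₀, B₀, Subset.rfl, rfl, ht, le_rfl, h⟩
  · push Not at h
    obtain ⟨e, h1, b, hb, hbA⟩ := h
    have hB : (mulDysonETransform e (A₀, B₀)).2 = {b ∈ B₀ | e * b ∈ A₀} := by
      ext y
      simp [mulDysonETransform, mem_inv_smul_finset_iff]
    have hcard := mulDysonETransform.card e (A₀, B₀)
    have hlt : #(mulDysonETransform e (A₀, B₀)).2 < n := by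
      rw [hB, ← hn]
      exact card_lt_card (filter_ssubset.2 ⟨b, hb, hbA⟩)
    obtain ⟨A, B, h2, h3, h4, h5, h6⟩ := ih _ hlt (mulDysonETransform e (A₀, B₀)).1
      (mulDysonETransform e (A₀, B₀)).2 rfl (by rw [hB]; exact h1)
    exact ⟨A, B, (subset_union_left).trans h2, h3.trans hcard, h4,
      h5.trans (sol_dyson_le A₀ B₀ D e), h6⟩

/-- For each `b ∈ B` at most `|G| - |D|` elements `x` satisfy `x b ∉ D`. -/
lemma card_mul_card_le_sol [Fintype G] (A B D : Finset G) :
    (#A : ℝ) * #B ≤ (Fintype.card G - #D) * #B + sol A B D := by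
  have h1 : #{p ∈ A ×ˢ B | ¬ p.1 * p.2 ∈ D} ≤ #(Dᶜ ×ˢ B) := by
    refine card_le_card_of_injOn (fun p => (p.1 * p.2, p.2)) ?_ ?_
    · rintro ⟨x, y⟩ h
      simp_all
    · rintro ⟨x, y⟩ h ⟨x', y'⟩ h' heq
      simp only [Prod.mk.injEq] at heq
      obtain ⟨h1, rfl⟩ := heq
      simpa using h1
  have h2 := card_filter_add_card_filter_not (s := A ×ˢ B) (fun p => p.1 * p.2 ∈ D)
  rw [card_product] at h1 h2
  rw [← Nat.cast_mul, ← h2, ← Nat.cast_sub (card_le_univ D), ← card_compl]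
  unfold sol
  have : (#{p ∈ A ×ˢ B | ¬ p.1 * p.2 ∈ D} : ℝ) ≤ (#Dᶜ : ℝ) * #B := by exact_mod_cast h1
  push_cast
  linarith

/-! ### The core of an extremal pair and its near-periods -/

/-- The set of all `e` such that the translate `eB` is contained in `A`. -/
def core [Fintype G] (A B : Finset G) : Finset G := {e | ∀ b ∈ B, e * b ∈ A}

/-- Sums `|eB ∩ A|` over all `e`: each core element contributes at most `|B|`, the others at
most `t`. -/
lemma card_mul_card_le_core [Fintype G] (A B : Finset G) (t : ℝ) (ht : 0 ≤ t)
    (h : ∀ e, (#{b ∈ B | e * b ∈ A} : ℝ) ≤ t ∨ ∀ b ∈ B, e * b ∈ A) :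
    (#A : ℝ) * #B ≤ #(core A B) * #B + t * Fintype.card G := by
  have h1 : #A * #B = ∑ e : G, #{b ∈ B | e * b ∈ A} := by
    rw [← card_product, ← card_sigma]
    refine card_bij' (fun p _ => ⟨p.1 * p.2⁻¹, p.2⟩) (fun p _ => (p.1 * p.2, p.2)) ?_ ?_ ?_ ?_
    · rintro ⟨x, y⟩ h; simp_all
    · rintro ⟨x, y⟩ h; simp_all
    · rintro ⟨x, y⟩ h; simp
    · rintro ⟨x, y⟩ h; simp
  rw [← Nat.cast_mul, h1, Nat.cast_sum]
  calc ∑ e : G, (#{b ∈ B | e * b ∈ A} : ℝ)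
      ≤ ∑ e : G, ((if e ∈ core A B then (#B : ℝ) else 0) + t) := by
        refine sum_le_sum fun e _ => ?_
        by_cases he : e ∈ core A B
        · simp only [he, if_true]
          have : (#{b ∈ B | e * b ∈ A} : ℝ) ≤ #B := by exact_mod_cast card_filter_le _ _
          linarith
        · simp only [he, if_false, zero_add]
          refine (h e).resolve_right fun h' => he ?_
          simpa [core] using h'
    _ = _ := by
        rw [sum_add_distrib, ← sum_filter]
        simp [mul_comm]

/-- The number of elements of `E` that translation by `d` moves out of `E`. -/
def defect (E : Finset G) (d : G) : ℕ := #{e ∈ E | e * d ∉ E}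

lemma defect_one (E : Finset G) : defect E 1 = 0 := by
  simp [defect, filter_eq_empty_iff]

lemma defect_mul_le (E : Finset G) (d d' : G) :
    defect E (d * d') ≤ defect E d + defect E d' := by
  unfold defect
  have h : #{e ∈ E | e * d ∈ E ∧ e * d * d' ∉ E} ≤ #{e ∈ E | e * d' ∉ E} :=
    card_le_card_of_injOn (· * d) (by intro x; simp +contextual) (mul_left_injective d).injOn
  refine le_trans ?_ (Nat.add_le_add_left h _)
  refine le_trans (card_le_card ?_) (card_union_le _ _)
  intro e
  simp only [mem_filter, mem_union, ← mul_assoc]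
  tauto

/-- Both `core A B * b` and `core A B * b'` are contained in `A`, so they overlap substantially. -/
lemma defect_div_le [Fintype G] (A B : Finset G) {b b' : G} (hb : b ∈ B) (hb' : b' ∈ B) :
    defect (core A B) (b / b') + #(core A B) ≤ #A := by
  have h1 : #((core A B).image (· * b')) = #(core A B) :=
    card_image_of_injective _ (mul_left_injective b')
  have h2 : (core A B).image (· * b') ⊆ A := by
    intro x
    simp only [core, mem_image, mem_filter, mem_univ, true_and]
    rintro ⟨e, he, rfl⟩
    exact he _ hb'
  have h3 : defect (core A B) (b / b') ≤ #(A \ (core A B).image (· * b')) := by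
    refine card_le_card_of_injOn (· * b) ?_ (mul_left_injective b).injOn
    intro e he
    simp only [coe_filter, Set.mem_ofPred_eq] at he
    simp only [coe_sdiff, Set.mem_sdiff, mem_coe, mem_image, not_exists, not_and]
    refine ⟨(mem_filter.1 he.1).2 _ hb, fun x hx hxe => he.2 ?_⟩
    have : e * (b / b') = x := by rw [← mul_div_assoc, ← hxe, mul_div_cancel_right]
    exact this ▸ hx
  rw [card_sdiff_of_subset h2, h1] at h3
  have := card_le_card h2
  omega

lemma defect_pow_le (E S : Finset G) (s : ℕ) (h : ∀ d ∈ S, defect E d ≤ s) (k : ℕ) :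
    ∀ d ∈ S ^ k, defect E d ≤ k * s := by
  induction k with
  | zero => intro d hd; simp at hd; simp [hd, defect_one]
  | succ k ih =>
    intro d hd
    rw [pow_succ, mem_mul] at hd
    obtain ⟨x, hx, y, hy, rfl⟩ := hd
    have := defect_mul_le E x y
    have := ih x hx
    have := h y hy
    nlinarith

/-- An element `x` of `(B / B) ^ (k + 2)` outside `(B / B) ^ (k + 1)` provides a translate `x B`
disjoint from `(B / B) ^ k * B`. -/
lemma growth (B : Finset G) (k : ℕ) (h : ¬ (B / B) ^ (k + 2) ⊆ (B / B) ^ (k + 1)) :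
    #((B / B) ^ k * B) + #B ≤ #((B / B) ^ (k + 2) * B) := by
  obtain ⟨x, hx, hx'⟩ := not_subset.1 h
  have hB : B.Nonempty := by
    by_contra hB
    rw [not_nonempty_iff_eq_empty] at hB
    simp [hB, pow_succ] at hx
  have h1 : (1 : G) ∈ B / B := by
    obtain ⟨b, hb⟩ := hB
    exact mem_div.2 ⟨b, hb, b, hb, div_self' b⟩
  have hdisj : Disjoint ((B / B) ^ k * B) (x • B) := by
    rw [disjoint_left]
    rintro _ hy hz
    obtain ⟨s, hs, b, hb, rfl⟩ := mem_mul.1 hy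
    obtain ⟨b', hb', hbb⟩ := mem_smul_finset.1 hz
    apply hx'
    have : x = s * (b / b') := by
      rw [← mul_div_assoc, ← hbb, smul_eq_mul, mul_div_cancel_right]
    rw [this, pow_succ]
    exact mul_mem_mul hs (div_mem_div hb hb')
  rw [← card_smul_finset x B, ← card_union_of_disjoint hdisj]
  refine card_le_card (union_subset ?_ ?_)
  · exact mul_subset_mul_right (pow_subset_pow_right h1 (by omega))
  · intro y hy
    obtain ⟨b, hb, rfl⟩ := mem_smul_finset.1 hy
    exact mul_mem_mul hx hb

/-- If `5|B| > |G|`, the powers of `B / B` stabilise at some exponent `k ≤ 7`, since otherwise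
`growth` would make `(B / B) ^ 8 * B` larger than `G`. The stable power is the subgroup `H`. -/
lemma exists_subgroup [Fintype G] (B : Finset G) (hB : Fintype.card G < 5 * #B) :
    ∃ H : Subgroup G, (∀ b ∈ B, ∀ b' ∈ B, b / b' ∈ H) ∧
      ∃ k ≤ 7, ∀ h ∈ H, h ∈ (B / B) ^ k := by
  have hne : B.Nonempty := by
    rw [← card_pos]; omega
  have h1 : (1 : G) ∈ B / B := by
    obtain ⟨b, hb⟩ := hne
    exact mem_div.2 ⟨b, hb, b, hb, div_self' b⟩
  obtain ⟨k, hk0, hk7, hk⟩ : ∃ k, 1 ≤ k ∧ k ≤ 7 ∧ (B / B) ^ (k + 1) ⊆ (B / B) ^ k := by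
    by_contra! hcon
    have a0 := growth B 0 (hcon 1 (by norm_num) (by norm_num))
    have a2 := growth B 2 (hcon 3 (by norm_num) (by norm_num))
    have a4 := growth B 4 (hcon 5 (by norm_num) (by norm_num))
    have a6 := growth B 6 (hcon 7 (by norm_num) (by norm_num))
    have a8 := card_le_univ ((B / B) ^ (6 + 2) * B)
    simp only [pow_zero, one_mul, zero_add, Nat.reduceAdd] at a0 a2 a4 a6 a8
    omega
  have hstab : ∀ j, (B / B) ^ (k + j) ⊆ (B / B) ^ k := by
    intro j
    induction j with
    | zero => simp
    | succ j ih =>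
      rw [← add_assoc, pow_succ]
      exact (mul_subset_mul_right ih).trans (by rwa [← pow_succ])
  refine ⟨{ carrier := ((B / B) ^ k : Finset G)
            mul_mem' := ?_
            one_mem' := ?_
            inv_mem' := ?_ }, ?_, k, hk7, fun h hh => hh⟩
  · intro a b ha hb
    exact hstab k (by rw [pow_add]; exact mul_mem_mul ha hb)
  · exact one_mem_pow h1
  · intro x hx
    simp only [mem_coe] at hx ⊢
    have := inv_mem_inv hx
    rwa [← inv_pow, inv_div] at this
  · intro b hb b' hb'
    have : b / b' ∈ (B / B) ^ 1 := by rw [pow_one]; exact div_mem_div hb hb'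
    exact pow_subset_pow_right h1 hk0 this

/-! ### Almost periodic sets are nearly unions of cosets -/

/-- Counts the pairs `(e, h)` with `e ∈ E ∩ gH`, `h ∈ H` and `e h ∉ E`. The bound forces
`|E ∩ gH|` to be close to `0` or to `|H|`. -/
lemma coset_dichotomy [Fintype G] (E : Finset G) (H : Subgroup G) (F : ℝ) (hF : ∀ h ∈ H, (defect E h : ℝ) ≤ F)
    (g : G) :
    (#{e ∈ E | g⁻¹ * e ∈ H} : ℝ) * (Nat.card H - #{e ∈ E | g⁻¹ * e ∈ H}) ≤ F * Nat.card H := by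
  set X := {e ∈ E | g⁻¹ * e ∈ H} with hX
  have hH : #{h : G | h ∈ H} = Nat.card H := by
    rw [Nat.card_eq_fintype_card, Fintype.card_subtype]
  have h1 : #X * Nat.card H ≤ #X * #X + ∑ h ∈ {h : G | h ∈ H}, defect E h := by
    rw [← hH, ← card_product, ← card_product]
    unfold defect
    rw [← card_sigma]
    have := card_filter_add_card_filter_not (s := X ×ˢ ({h : G | h ∈ H} : Finset G))
      (fun p => p.1 * p.2 ∈ E)
    rw [← this]
    refine Nat.add_le_add ?_ ?_
    · refine card_le_card_of_injOn (fun p => (p.1, p.1 * p.2)) ?_ ?_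
      · rintro ⟨x, y⟩ h
        simp only [coe_filter, mem_product, Set.mem_ofPred_eq, hX, mem_filter, mem_univ, true_and,
          coe_product, Set.mem_prod] at h ⊢
        refine ⟨h.1.1, h.2, ?_⟩
        rw [← mul_assoc]
        exact H.mul_mem h.1.1.2 h.1.2
      · rintro ⟨x, y⟩ h ⟨x', y'⟩ h' heq
        simp only [Prod.mk.injEq] at heq
        obtain ⟨rfl, h2⟩ := heq
        simpa using h2
    · refine card_le_card_of_injOn (fun p => ⟨p.2, p.1⟩) ?_ ?_
      · rintro ⟨x, y⟩ h
        simp only [coe_filter, mem_product, Set.mem_ofPred_eq, hX, mem_filter, mem_univ, true_and,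
          coe_sigma, Set.mem_sigma_iff] at h ⊢
        exact ⟨h.1.2, h.1.1.1, h.2⟩
      · rintro ⟨x, y⟩ h ⟨x', y'⟩ h' heq
        simp at heq
        simp [heq]
  have h2 : (∑ h ∈ {h : G | h ∈ H}, (defect E h : ℝ)) ≤ F * Nat.card H := by
    rw [← hH, mul_comm, ← nsmul_eq_mul]
    exact sum_le_card_nsmul _ _ _ (by simpa using hF)
  have h3 : (#X * Nat.card H : ℝ) ≤ #X * #X + ∑ h ∈ {h : G | h ∈ H}, (defect E h : ℝ) := by
    exact_mod_cast h1
  linarith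

/-- If `E` nearly fills or nearly avoids every coset of `H`, then `|E|` is close to `k |H|`, with
`k` the number of nearly filled cosets. -/
lemma exists_near_multiple [Fintype G] (E : Finset G) (H : Subgroup G) (F : ℝ)
    (hE : ∀ g : G, (#{e ∈ E | g⁻¹ * e ∈ H} : ℝ) ≤ 2 * F ∨
      (Nat.card H : ℝ) - 2 * F ≤ #{e ∈ E | g⁻¹ * e ∈ H}) (hF : 0 ≤ F) :
    ∃ k ≤ H.index, |(#E : ℝ) - k * Nat.card H| ≤ H.index * (2 * F) := by
  have hfib : ∀ g : G, {e ∈ E | (QuotientGroup.mk e : G ⧸ H) = g} = {e ∈ E | g⁻¹ * e ∈ H} := by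
    intro g
    refine filter_congr fun e _ => ?_
    rw [eq_comm, QuotientGroup.eq]
  have hle : ∀ g : G, #{e ∈ E | g⁻¹ * e ∈ H} ≤ Nat.card H := by
    intro g
    rw [Nat.card_eq_fintype_card, Fintype.card_subtype]
    refine card_le_card_of_injOn (g⁻¹ * ·) ?_ (mul_right_injective g⁻¹).injOn
    intro e he
    simp_all
  have hsum : #E = ∑ c : G ⧸ H, #{e ∈ E | (QuotientGroup.mk e : G ⧸ H) = c} :=
    card_eq_sum_card_fiberwise fun _ _ => by simp
  have hidx : #(univ : Finset (G ⧸ H)) = H.index := by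
    rw [card_univ, ← Nat.card_eq_fintype_card]; rfl
  refine ⟨#{c : G ⧸ H | 2 * F < (#{e ∈ E | (QuotientGroup.mk e : G ⧸ H) = c} : ℝ)}, ?_, ?_⟩
  · rw [← hidx]; exact card_filter_le _ _
  · have hk : (#{c : G ⧸ H | 2 * F < (#{e ∈ E | (QuotientGroup.mk e : G ⧸ H) = c} : ℝ)} : ℝ) * Nat.card H =
        ∑ c : G ⧸ H, if 2 * F < (#{e ∈ E | (QuotientGroup.mk e : G ⧸ H) = c} : ℝ) then (Nat.card H : ℝ) else 0 := by
      rw [← sum_filter]; simp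
    rw [hk, hsum, Nat.cast_sum, ← sum_sub_distrib]
    refine (abs_sum_le_sum_abs _ _).trans ?_
    rw [← hidx, ← nsmul_eq_mul]
    refine sum_le_card_nsmul _ _ _ fun c _ => ?_
    induction c using QuotientGroup.induction_on with
    | H g =>
    rw [hfib]
    have h1 : (#{e ∈ E | g⁻¹ * e ∈ H} : ℝ) ≤ Nat.card H := by exact_mod_cast hle g
    have h0 : (0 : ℝ) ≤ #{e ∈ E | g⁻¹ * e ∈ H} := by positivity
    rw [abs_le]
    split_ifs with h
    · have := (hE g).resolve_left (not_le.2 h)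
      constructor <;> linarith
    · constructor <;> linarith

/-- The numerical heart of the matter, applied with `a = |A|`, `b = |B|`, `e = |core A B|`,
`h = |H|` and `n` the index of `H`: a set of density in `[2/5, 3/5]` that is nearly a union of `k`
out of `n ≤ 4` cosets, and has density at least about `4/5 - 1/n`, forces `n = 2`. -/
lemma index_eq_two_of_bounds {N h a b e F ε : ℝ} {n k : ℕ} (hN : 0 < N) (hn : n ≠ 0) (hkn : k ≤ n)
    (hh : h * n = N) (hε : 0 < ε) (hF : F ≤ N / 10000) (hb : N / 5 < b) (hbh : b ≤ h)
    (hab : (4 / 5 + 2 * ε) * N ≤ a + b) (ha1 : 2 / 5 * N ≤ a) (ha2 : a ≤ 3 / 5 * N)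
    (he1 : a - F ≤ e) (he2 : e ≤ a) (hk : |e - k * h| ≤ n * (2 * F)) : n = 2 := by
  have hh0 : 0 < h := by linarith
  have hn5 : n < 5 := by
    by_contra hcon
    have : (5 : ℝ) ≤ n := by exact_mod_cast not_lt.1 hcon
    nlinarith
  have hεN : 0 < ε * N := by positivity
  rw [abs_le] at hk
  obtain ⟨hk1, hk2⟩ := hk
  interval_cases n
  · exact absurd rfl hn
  · exfalso
    interval_cases k <;> norm_num at * <;> linarith
  · rfl
  · exfalso
    interval_cases k <;> norm_num at * <;> linarith
  · exfalso
    interval_cases k <;> norm_num at * <;> linarith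

/-- For index `2`, an almost periodic set not close to the whole group lies in one coset up to few
elements. -/
lemma exists_coset_of_index_two [Fintype G] (E : Finset G) (H : Subgroup G) (hH : H.index = 2) (F : ℝ)
    (hE : ∀ g : G, (#{e ∈ E | g⁻¹ * e ∈ H} : ℝ) ≤ 2 * F ∨
      (Nat.card H : ℝ) - 2 * F ≤ #{e ∈ E | g⁻¹ * e ∈ H})
    (h2 : (#E : ℝ) < 2 * Nat.card H - 4 * F) :
    ∃ g : G, (#{e ∈ E | g⁻¹ * e ∉ H} : ℝ) ≤ 2 * F := by
  obtain ⟨u, hu⟩ := Subgroup.index_eq_two_iff.1 hH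
  have hu1 : u ∉ H := by
    have := hu 1
    simp only [one_mul, one_mem] at this
    rcases this with h | h
    · exact absurd trivial h.2
    · exact h.2
  have hflip : ∀ g : G, #{e ∈ E | g⁻¹ * e ∉ H} = #{e ∈ E | (g * u)⁻¹ * e ∈ H} := by
    intro g
    congr 1
    refine filter_congr fun e _ => ?_
    rw [mul_inv_rev, mul_assoc, Subgroup.mul_mem_iff_of_index_two hH (a := u⁻¹), inv_mem_iff]
    tauto
  have hadd : ∀ g : G, (#{e ∈ E | g⁻¹ * e ∈ H} : ℝ) + #{e ∈ E | g⁻¹ * e ∉ H} = #E := by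
    intro g
    exact_mod_cast card_filter_add_card_filter_not (s := E) (fun e => g⁻¹ * e ∈ H)
  have key := hadd 1
  rcases hE (1 * u) with h | h
  · rw [← hflip] at h
    exact ⟨1, h⟩
  · rcases hE 1 with h' | h'
    · refine ⟨1 * u, ?_⟩
      have := hadd (1 * u)
      rw [← hflip] at this
      linarith
    · rw [← hflip] at h
      exfalso
      linarith

/-- The numerical bootstrap bounding the extremal pair. The hypothesis `hcount` reads
`a ≤ N - d + t N / (10 b)`; with `b > t` this first gives `b > N / 10`, and then, reinserted,
`a ≤ N - d + t`. -/
lemma extremal_bounds {N a b d s t ε : ℝ} (hN : 0 < N) (ht0 : 0 < t) (htε : t < ε * N)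
    (htb : t < b) (hs : s ≤ t * N / 10) (hcount : a * b ≤ (N - d) * b + s)
    (hd : (2 / 5 + ε) * N < d) (hab : (4 / 5 + 2 * ε) * N < a + b) :
    N / 5 < b ∧ a ≤ 3 / 5 * N := by
  have hεN : 0 < ε * N := ht0.trans htε
  have h1 : a ≤ N - d + N / 10 := by
    by_contra! hcon
    have e1 : N / 10 * b < (a - (N - d)) * b := mul_lt_mul_of_pos_right (by linarith) (by linarith)
    have e2 : N / 10 * t < N / 10 * b := mul_lt_mul_of_pos_left htb (by linarith)
    linarith
  have h2 : N / 10 < b := by linarith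
  have h3 : a ≤ N - d + t := by
    by_contra! hcon
    have e1 : t * b < (a - (N - d)) * b := mul_lt_mul_of_pos_right (by linarith) (by linarith)
    have e2 : t * (N / 10) < t * b := mul_lt_mul_of_pos_left h2 ht0
    linarith
  constructor <;> linarith

/-- If few pairs of `A₀ × B₀` have product in `D`, then `A₀` is contained, up to `O(ε² |G|)`
elements, in a coset of a subgroup of index `2`. -/
lemma exists_concentration [Fintype G] (A₀ B₀ D : Finset G) (ε : ℝ) (hε : 0 < ε) (hε' : ε < 1 / 100)
    (hA : (2 / 5 + ε) * Fintype.card G < #A₀) (hB : (2 / 5 + ε) * Fintype.card G < #B₀)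
    (hD : (2 / 5 + ε) * Fintype.card G < #D)
    (hsol : (sol A₀ B₀ D : ℝ) < 1 / 500 * ε ^ 2 * (Fintype.card G : ℝ) ^ 2) :
    ∃ H : Subgroup G, H.index = 2 ∧
      ∃ g : G, (#{x ∈ A₀ | g⁻¹ * x ∉ H} : ℝ) ≤ 3 / 2 * ε ^ 2 * Fintype.card G := by
  set N : ℝ := (Fintype.card G : ℝ) with hNdef
  have hN : 0 < N := by rw [hNdef]; exact_mod_cast Fintype.card_pos
  have hεε : ε ^ 2 < ε / 100 := by nlinarith
  have hεN : 0 < ε * N := by positivity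
  have hεεN : ε ^ 2 * N < ε * N / 100 := by nlinarith
  have hεN' : ε * N < N / 100 := by nlinarith
  have hεε0 : 0 < ε ^ 2 * N := by positivity
  set t : ℝ := ε ^ 2 * N / 50 with ht
  obtain ⟨A, B, hAA, hcard, htB, hs, hext⟩ :=
    exists_extremal D t _ A₀ B₀ rfl (by linarith)
  have hcard' : (#A : ℝ) + #B = #A₀ + #B₀ := by exact_mod_cast hcard
  have hAA' : (#A₀ : ℝ) ≤ #A := by exact_mod_cast card_le_card hAA
  have hs' : (sol A B D : ℝ) ≤ t * N / 10 := by
    have : (sol A B D : ℝ) ≤ sol A₀ B₀ D := by exact_mod_cast hs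
    have h2 : t * N / 10 = 1 / 500 * ε ^ 2 * N ^ 2 := by rw [ht]; ring
    linarith
  have hcount := card_mul_card_le_sol A B D
  rw [← hNdef] at hcount
  have ht0 : 0 < t := by positivity
  obtain ⟨hB2, hA3⟩ := extremal_bounds hN ht0 (by linarith) htB hs' hcount hD (by linarith)
  have hcore := card_mul_card_le_core A B t ht0.le hext
  rw [← hNdef] at hcore
  have hE1 : (#A : ℝ) - 5 * t ≤ #(core A B) := by
    by_contra! hcon
    have e1 : 5 * t * #B < (#A - #(core A B)) * #B :=
      mul_lt_mul_of_pos_right (by linarith) (by linarith)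
    have e2 : t * (N / 5) < t * #B := mul_lt_mul_of_pos_left hB2 ht0
    linarith
  obtain ⟨b₀, hb₀⟩ : B.Nonempty := by
    rw [← card_pos]
    have : (0 : ℝ) < #B := by linarith
    exact_mod_cast this
  have hE2 : #(core A B) ≤ #A :=
    card_le_card_of_injOn (· * b₀) (fun e he => (mem_filter.1 he).2 _ hb₀)
      (mul_left_injective b₀).injOn
  have hE2' : (#(core A B) : ℝ) ≤ #A := by exact_mod_cast hE2
  obtain ⟨H, hBH, k, hk, hHk⟩ := exists_subgroup B (by
    have : N < 5 * #B := by linarith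
    rw [hNdef] at this
    exact_mod_cast this)
  have hdef : ∀ h ∈ H, (defect (core A B) h : ℝ) ≤ 35 * t := by
    intro h hh
    have h1 := defect_pow_le (core A B) (B / B) (#A - #(core A B)) (by
      intro d hd
      obtain ⟨b, hb, b', hb', rfl⟩ := mem_div.1 hd
      have := defect_div_le A B hb hb'
      omega) k h (hHk h hh)
    have h2 : defect (core A B) h ≤ 7 * (#A - #(core A B)) :=
      h1.trans (Nat.mul_le_mul_right _ hk)
    have h3 : (defect (core A B) h : ℝ) ≤ 7 * (#A - #(core A B)) := by
      rw [← Nat.cast_sub hE2]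
      exact_mod_cast h2
    linarith
  have hHpos : (0 : ℝ) < Nat.card H := by exact_mod_cast Nat.card_pos
  have hdich : ∀ g : G, (#{e ∈ core A B | g⁻¹ * e ∈ H} : ℝ) ≤ 2 * (35 * t) ∨
      (Nat.card H : ℝ) - 2 * (35 * t) ≤ #{e ∈ core A B | g⁻¹ * e ∈ H} := by
    intro g
    have := coset_dichotomy (core A B) H (35 * t) hdef g
    by_contra! hcon
    obtain ⟨hc1, hc2⟩ := hcon
    set x : ℝ := (#{e ∈ core A B | g⁻¹ * e ∈ H} : ℝ)
    set y : ℝ := (Nat.card H : ℝ) - x with hy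
    have hu : 0 < 35 * t := by positivity
    have hy2 : 2 * (35 * t) < y := by linarith only [hc2, hy]
    have e1 : 2 * (35 * t) * y < x * y := mul_lt_mul_of_pos_right hc1 (by linarith only [hu, hy2])
    have e2 : x * (2 * (35 * t)) < x * y :=
      mul_lt_mul_of_pos_left hy2 (by linarith only [hu, hc1])
    have e3 : (Nat.card H : ℝ) = x + y := by rw [hy]; ring
    rw [e3] at this
    linarith only [this, e1, e2]
  obtain ⟨m, hm, hmk⟩ := exists_near_multiple (core A B) H (35 * t) hdich (by positivity)
  have hBle : #B ≤ Nat.card H := by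
    rw [Nat.card_eq_fintype_card, Fintype.card_subtype]
    refine card_le_card_of_injOn (· / b₀) ?_ (div_left_injective).injOn
    intro b hb
    simpa using hBH b hb b₀ hb₀
  have hidx : (Nat.card H : ℝ) * H.index = N := by
    rw [hNdef, ← Nat.card_eq_fintype_card, ← H.card_mul_index]
    push_cast; ring
  have h2 : H.index = 2 :=
    index_eq_two_of_bounds (N := N) (h := Nat.card H) (a := #A) (b := #B) (e := #(core A B))
      (F := 35 * t) (ε := ε) hN H.index_ne_zero_of_finite hm hidx hε (by linarith)
      hB2 (by exact_mod_cast hBle) (by linarith) (by linarith) hA3 (by linarith) hE2' hmk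
  rw [h2] at hidx
  push_cast at hidx
  obtain ⟨g, hg⟩ := exists_coset_of_index_two (core A B) H h2 (35 * t) hdich (by linarith)
  refine ⟨H, h2, g * b₀, ?_⟩
  -- `core A B * b₀` fills `A` up to few elements, and `A₀ ⊆ A`
  have hfin : #{x ∈ A₀ | (g * b₀)⁻¹ * x ∉ H} ≤
      #{e ∈ core A B | g⁻¹ * e ∉ H} + (#A - #(core A B)) := by
    have hsub : (core A B).image (· * b₀) ⊆ A := by
      intro x hx
      obtain ⟨e, he, rfl⟩ := mem_image.1 hx
      exact (mem_filter.1 he).2 _ hb₀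
    have hc : #((core A B).image (· * b₀)) = #(core A B) :=
      card_image_of_injective _ (mul_left_injective b₀)
    have hsd := card_sdiff_of_subset hsub
    rw [hc] at hsd
    rw [← hsd, ← card_image_of_injective {e ∈ core A B | g⁻¹ * e ∉ H} (mul_left_injective b₀)]
    refine (card_le_card ?_).trans (card_union_le _ _)
    intro x hx
    rw [mem_filter] at hx
    rw [mem_union, mem_sdiff, mem_image, mem_image]
    by_cases hxe : ∃ e ∈ core A B, e * b₀ = x
    · left
      obtain ⟨e, he, rfl⟩ := hxe
      refine ⟨e, mem_filter.2 ⟨he, fun hmem => hx.2 ?_⟩, rfl⟩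
      convert hmem using 1
      rw [mul_inv_rev, mul_comm e, mul_assoc, mul_left_comm g⁻¹, inv_mul_cancel_left]
    · right
      exact ⟨hAA hx.1, hxe⟩
  have hfin' : (#{x ∈ A₀ | (g * b₀)⁻¹ * x ∉ H} : ℝ) ≤
      #{e ∈ core A B | g⁻¹ * e ∉ H} + (#A - #(core A B)) := by
    rw [← Nat.cast_sub hE2]
    exact_mod_cast hfin
  linarith

/-! ### Counting triples -/

/-- The number of triples in `A × B × C` with product `a`. -/
def triples (A B C : Finset G) (a : G) : ℕ := #{p ∈ A ×ˢ B ×ˢ C | p.1 * p.2.1 * p.2.2 = a}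

lemma triples_rotate (A B C : Finset G) (a : G) : triples A B C a ≤ triples A C B a := by
  refine card_le_card_of_injOn (fun p => (p.1, p.2.2, p.2.1)) ?_ ?_
  · rintro ⟨x, y, z⟩ h
    simp only [coe_filter, mem_product, Set.mem_ofPred_eq] at h ⊢
    exact ⟨⟨h.1.1, h.1.2.2, h.1.2.1⟩, by rw [← h.2, mul_right_comm]⟩
  · rintro ⟨x, y, z⟩ _ ⟨x', y', z'⟩ _ heq
    simp only [Prod.mk.injEq] at heq ⊢
    tauto

lemma sol_le_triples (A B C : Finset G) (a : G) :
    sol A B (C.image fun z => a / z) ≤ triples A B C a := by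
  refine card_le_card_of_injOn (fun p => (p.1, p.2, a / (p.1 * p.2))) ?_ ?_
  · rintro ⟨x, y⟩ h
    simp only [coe_filter, mem_product, Set.mem_ofPred_eq, mem_image] at h ⊢
    obtain ⟨⟨hx, hy⟩, z, hz, hzz⟩ := h
    refine ⟨⟨hx, hy, ?_⟩, mul_div_cancel _ _⟩
    rw [← hzz, div_div_cancel]
    exact hz
  · rintro ⟨x, y⟩ _ ⟨x', y'⟩ _ heq
    simp only [Prod.mk.injEq] at heq ⊢
    tauto

/-- For each `z ∈ C` in the coset `a(gg')⁻¹H`, the sets `A ∩ gH` and `(a / z) / (B ∩ g'H)` are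
contained in the same coset `gH`, so they share at least `|A ∩ gH| + |B ∩ g'H| - |H|` elements. -/
lemma triples_ge [Fintype G] (A B C : Finset G) (a g g' : G) (H : Subgroup G) :
    (#{z ∈ C | g * g' * a⁻¹ * z ∈ H} : ℝ) *
      (#{x ∈ A | g⁻¹ * x ∈ H} + #{y ∈ B | g'⁻¹ * y ∈ H} - Nat.card H) ≤ triples A B C a := by
  set X := {x ∈ A | g⁻¹ * x ∈ H} with hX
  set Y := {y ∈ B | g'⁻¹ * y ∈ H} with hY
  set Z := {z ∈ C | g * g' * a⁻¹ * z ∈ H} with hZ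
  have hz : ∀ z ∈ Z, (#X + #Y - Nat.card H : ℝ) ≤ #{x ∈ X | a / (x * z) ∈ Y} := by
    intro z hz
    have h1 : #(X.image (g⁻¹ * ·)) = #X := card_image_of_injective _ (mul_right_injective _)
    have hinj : Function.Injective (fun y => g⁻¹ * (a / (y * z))) := by
      intro y y' h
      simpa using h
    have h2 : #(Y.image fun y => g⁻¹ * (a / (y * z))) = #Y := card_image_of_injective _ hinj
    have h3 : X.image (g⁻¹ * ·) ∪ Y.image (fun y => g⁻¹ * (a / (y * z))) ⊆
        ({h : G | h ∈ H} : Finset G) := by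
      refine union_subset ?_ ?_
      · intro w hw
        obtain ⟨x, hx, rfl⟩ := mem_image.1 hw
        simpa using (mem_filter.1 hx).2
      · intro w hw
        obtain ⟨y, hy, rfl⟩ := mem_image.1 hw
        have e1 := (mem_filter.1 hy).2
        have e2 := (mem_filter.1 hz).2
        have e3 := H.inv_mem (H.mul_mem e1 e2)
        simp only [mem_filter, mem_univ, true_and]
        convert e3 using 1
        simp only [div_eq_mul_inv, mul_inv_rev, inv_inv]
        rw [show z⁻¹ * (a * (g'⁻¹ * g⁻¹)) * (y⁻¹ * g') =
          (g'⁻¹ * g') * (g⁻¹ * (a * (z⁻¹ * y⁻¹))) by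
            simp only [mul_comm, mul_left_comm, mul_assoc]]
        simp
    have h4 := card_le_card h3
    have hcardH : #({h : G | h ∈ H} : Finset G) = Nat.card H := by
      rw [Nat.card_eq_fintype_card, Fintype.card_subtype]
    have h5 := card_union_add_card_inter (X.image (g⁻¹ * ·))
      (Y.image (fun y => g⁻¹ * (a / (y * z))))
    have h6 : #(X.image (g⁻¹ * ·) ∩ Y.image (fun y => g⁻¹ * (a / (y * z)))) ≤
        #{x ∈ X | a / (x * z) ∈ Y} := by
      rw [← card_image_of_injective {x ∈ X | a / (x * z) ∈ Y} (mul_right_injective g⁻¹)]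
      refine card_le_card fun w hw => ?_
      obtain ⟨hw1, hw2⟩ := mem_inter.1 hw
      obtain ⟨x, hx, rfl⟩ := mem_image.1 hw1
      obtain ⟨y, hy, hxy⟩ := mem_image.1 hw2
      refine mem_image_of_mem _ (mem_filter.2 ⟨hx, ?_⟩)
      have hxy' : a / (y * z) = x := mul_left_cancel hxy
      have : a / (x * z) = y := by
        rw [← hxy', div_eq_iff_eq_mul, div_mul_eq_mul_div, mul_div_assoc', eq_div_iff_mul_eq']
        simp only [mul_comm, mul_left_comm]
      rw [this]; exact hy
    have h7 : #X + #Y ≤ #{x ∈ X | a / (x * z) ∈ Y} + Nat.card H := by omega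
    have h8 : (#X + #Y : ℝ) ≤ #{x ∈ X | a / (x * z) ∈ Y} + Nat.card H := by exact_mod_cast h7
    linarith
  have hsum : ∑ z ∈ Z, #{x ∈ X | a / (x * z) ∈ Y} ≤ triples A B C a := by
    rw [← card_sigma]
    refine card_le_card_of_injOn (fun p => (p.2, a / (p.2 * p.1), p.1)) ?_ ?_
    · rintro ⟨z, x⟩ h
      simp only [coe_sigma, Set.mem_sigma_iff, mem_filter, coe_filter, mem_product,
        Set.mem_ofPred_eq, hX, hY, hZ] at h ⊢
      refine ⟨⟨h.2.1.1, h.2.2.1, h.1.1⟩, ?_⟩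
      rw [mul_right_comm, mul_div_cancel]
    · rintro ⟨z, x⟩ _ ⟨z', x'⟩ _ heq
      simp only [Prod.mk.injEq] at heq
      obtain ⟨rfl, _, rfl⟩ := heq
      rfl
  calc _ = ∑ z ∈ Z, (#X + #Y - Nat.card H : ℝ) := by rw [sum_const, nsmul_eq_mul]
    _ ≤ ∑ z ∈ Z, (#{x ∈ X | a / (x * z) ∈ Y} : ℝ) := sum_le_sum hz
    _ ≤ _ := by exact_mod_cast hsum

/-- Failure of alternative (a) at a single `a` implies alternative (b), in any finite abelian
group. -/
lemma structure_of_few_triples [Fintype G] (A B C : Finset G) (a : G) (ε : ℝ) (hε : 0 < ε) (hε' : ε < 1 / 100)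
    (hA : (2 / 5 + ε) * Fintype.card G < #A) (hB : (2 / 5 + ε) * Fintype.card G < #B)
    (hC : (2 / 5 + ε) * Fintype.card G < #C)
    (hT : (triples A B C a : ℝ) < 1 / 500 * ε ^ 2 * (Fintype.card G : ℝ) ^ 2) :
    ∃ H : Subgroup G, H.index = 2 ∧ ∃ a₁ ∈ A, ∃ a₂ ∈ B, ∃ a₃ ∈ C,
      (#A : ℝ) - ε / 2 * Fintype.card G ≤ #{x ∈ A | a₁⁻¹ * x ∈ H} ∧
      (#B : ℝ) - ε / 2 * Fintype.card G ≤ #{x ∈ B | a₂⁻¹ * x ∈ H} ∧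
      (#C : ℝ) - ε / 2 * Fintype.card G ≤ #{x ∈ C | a₃⁻¹ * x ∈ H} ∧
      ∀ a', (a₁ * a₂ * a₃)⁻¹ * a' ∈ H →
        1 / 25 * (Fintype.card G : ℝ) ^ 2 ≤ triples A B C a' := by
  have hD : #(C.image fun z => a / z) = #C :=
    card_image_of_injective _ div_right_injective
  have hsol : (sol A B (C.image fun z => a / z) : ℝ) ≤ triples A B C a := by
    exact_mod_cast sol_le_triples A B C a
  obtain ⟨H, h2, g, hg⟩ := exists_concentration A B (C.image fun z => a / z) ε hε hε' hA hB
    (by rwa [hD]) (hsol.trans_lt hT)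
  set N : ℝ := (Fintype.card G : ℝ) with hNdef
  have hN : 0 < N := by rw [hNdef]; exact_mod_cast Fintype.card_pos
  have hεN : 0 < ε * N := by positivity
  have hεεN : ε ^ 2 * N < ε * N / 100 := by nlinarith
  have hεN' : ε * N < N / 100 := by nlinarith
  have hεε0 : 0 < ε ^ 2 * N := by positivity
  have hidx : (Nat.card H : ℝ) * 2 = N := by
    rw [hNdef, ← Nat.card_eq_fintype_card, ← H.card_mul_index, h2]
    push_cast; ring
  have hadd : ∀ (E : Finset G) (g : G),
      (#{e ∈ E | g * e ∈ H} : ℝ) + #{e ∈ E | g * e ∉ H} = #E := by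
    intro E g
    exact_mod_cast card_filter_add_card_filter_not (s := E) (fun e => g * e ∈ H)
  obtain ⟨u, hu⟩ : ∃ u, u ∉ H := by
    by_contra! hcon
    have : H = ⊤ := by ext; simp [hcon]
    rw [this, Subgroup.index_top] at h2
    omega
  have hflip : ∀ (E : Finset G) (g u : G), u ∉ H →
      #{e ∈ E | g * e ∉ H} = #{e ∈ E | u * g * e ∈ H} := by
    intro E g u hu
    congr 1
    refine filter_congr fun e _ => ?_
    rw [mul_assoc, Subgroup.mul_mem_iff_of_index_two (b := g * e) h2]
    tauto
  have hA' := hadd A g⁻¹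
  -- the coset of `H` containing most of `B`
  obtain ⟨v, hv⟩ : ∃ v : G, N / 5 ≤ #{y ∈ B | v⁻¹ * y ∈ H} := by
    by_contra! hcon
    have h1 := hcon 1
    have h3 := hcon u⁻¹
    have h4 := hadd B 1⁻¹
    rw [hflip B 1⁻¹ u hu] at h4
    simp only [inv_one, mul_one, inv_inv] at h1 h3 h4
    linarith
  have hηN : 1 / 500 * ε ^ 2 * N ^ 2 = (ε ^ 2 * N / 50) * (N / 10) := by ring
  rw [hηN] at hT
  have hCsmall : (#{z ∈ C | g * v * a⁻¹ * z ∈ H} : ℝ) ≤ ε ^ 2 * N / 50 := by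
    have h1 := triples_ge A B C a g v H
    by_contra! hcon
    have h3 : N / 10 ≤ (#{x ∈ A | g⁻¹ * x ∈ H} + #{y ∈ B | v⁻¹ * y ∈ H} - Nat.card H : ℝ) := by
      linarith
    have := mul_le_mul hcon.le h3 (by positivity) (by positivity)
    linarith
  have hC' := hadd C (g * v * a⁻¹)
  -- `c` represents the coset of `H` containing most of `C`
  set c : G := (u * (g * v * a⁻¹))⁻¹ with hc
  have hCflip := hflip C (g * v * a⁻¹) u hu
  have hBsmall : (#{y ∈ B | v⁻¹ * y ∉ H} : ℝ) ≤ ε ^ 2 * N / 50 := by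
    have h1 := triples_ge A C B a g c H
    have hfil : #{z ∈ B | g * c * a⁻¹ * z ∈ H} = #{y ∈ B | v⁻¹ * y ∉ H} := by
      rw [hflip B v⁻¹ u⁻¹ (by rwa [inv_mem_iff])]
      congr 1
      refine filter_congr fun e _ => ?_
      have : g * c * a⁻¹ = u⁻¹ * v⁻¹ := by
        rw [hc]
        simp only [mul_inv_rev, inv_inv]
        rw [show g * (a * (v⁻¹ * g⁻¹) * u⁻¹) * a⁻¹ = (g * g⁻¹) * (a * a⁻¹) * (u⁻¹ * v⁻¹) by
          simp only [mul_comm, mul_left_comm, mul_assoc]]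
        simp
      rw [this]
    have hT' : (triples A C B a : ℝ) ≤ triples A B C a := by
      exact_mod_cast triples_rotate A C B a
    rw [hfil] at h1
    by_contra! hcon
    have h3 : N / 10 ≤ (#{x ∈ A | g⁻¹ * x ∈ H} + #{y ∈ C | c⁻¹ * y ∈ H} - Nat.card H : ℝ) := by
      rw [hc, inv_inv, ← hCflip]
      linarith
    have := mul_le_mul hcon.le h3 (by positivity) (by positivity)
    linarith
  have hB' := hadd B v⁻¹
  -- any element of the large part represents its coset
  have hrep : ∀ (E : Finset G) (g : G), (0 : ℝ) < #{x ∈ E | g⁻¹ * x ∈ H} →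
      ∃ e ∈ E, {x ∈ E | e⁻¹ * x ∈ H} = {x ∈ E | g⁻¹ * x ∈ H} := by
    intro E g h
    have h' : 0 < #{x ∈ E | g⁻¹ * x ∈ H} := by exact_mod_cast h
    obtain ⟨e, he⟩ := card_pos.1 h'
    rw [mem_filter] at he
    refine ⟨e, he.1, filter_congr fun x _ => ?_⟩
    rw [← H.mul_mem_cancel_left he.2, mul_assoc, mul_inv_cancel_left]
  have hCc : (#{x ∈ C | c⁻¹ * x ∈ H} : ℝ) = #{x ∈ C | g * v * a⁻¹ * x ∉ H} := by
    rw [hCflip, hc, inv_inv]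
  obtain ⟨a₁, ha₁, e₁⟩ := hrep A g (by linarith)
  obtain ⟨a₂, ha₂, e₂⟩ := hrep B v (by linarith)
  obtain ⟨a₃, ha₃, e₃⟩ := hrep C c (by linarith)
  refine ⟨H, h2, a₁, ha₁, a₂, ha₂, a₃, ha₃, ?_, ?_, ?_, ?_⟩
  · rw [e₁]; linarith
  · rw [e₂]; linarith
  · rw [e₃]; linarith
  · intro a' ha'
    have h1 := triples_ge A B C a' a₁ a₂ H
    have hfil : {z ∈ C | a₁ * a₂ * a'⁻¹ * z ∈ H} = {z ∈ C | a₃⁻¹ * z ∈ H} := by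
      refine filter_congr fun z _ => ?_
      rw [← H.mul_mem_cancel_left ha', show (a₁ * a₂ * a₃)⁻¹ * a' * (a₁ * a₂ * a'⁻¹ * z) =
        (a₁ * a₂ * a₃)⁻¹ * (a₁ * a₂) * (a' * a'⁻¹) * z by
          simp only [mul_comm, mul_left_comm, mul_assoc]]
      rw [mul_inv_cancel, mul_one, mul_inv_rev, inv_mul_cancel_right]
    rw [hfil, e₁, e₂, e₃] at h1
    have h3 : N / 5 ≤ (#{x ∈ A | g⁻¹ * x ∈ H} + #{y ∈ B | v⁻¹ * y ∈ H} - Nat.card H : ℝ) := by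
      linarith
    have h4 : N / 5 ≤ (#{x ∈ C | c⁻¹ * x ∈ H} : ℝ) := by linarith
    have := mul_le_mul h4 h3 (by positivity) (by positivity)
    linarith

end Group

lemma conv3_eq_triples (q : ℕ) [NeZero q] (A₁ A₂ A₃ : Finset ((ZMod q)ˣ)) (a : (ZMod q)ˣ) :
    conv3 q A₁ A₂ A₃ a = triples A₁ A₂ A₃ a := by
  unfold conv3 triples
  rw [← Set.ncard_coe_finset]
  congr 1
  ext ⟨x, y, z⟩
  simp [and_assoc]

/-- **A lower bound on triple convolutions** (an application of Kneser's theorem). -/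
theorem triple_convolution_lower :
    ∃ ε₀ : ℝ, 0 < ε₀ ∧
      ∀ ε : ℝ, 0 < ε → ε < ε₀ →
        ∃ q₀ : ℕ,
          ∀ q : ℕ, q₀ ≤ q →
            ∀ A₁ A₂ A₃ : Finset ((ZMod q)ˣ),
              ((2 : ℝ) / 5 + ε) * (Nat.totient q : ℝ) < (A₁.card : ℝ) →
              ((2 : ℝ) / 5 + ε) * (Nat.totient q : ℝ) < (A₂.card : ℝ) →
              ((2 : ℝ) / 5 + ε) * (Nat.totient q : ℝ) < (A₃.card : ℝ) →
              -- (a)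
              (∀ a : (ZMod q)ˣ,
                (1 / 500 : ℝ) * ε ^ 2 * (Nat.totient q : ℝ) ^ 2 ≤ (conv3 q A₁ A₂ A₃ a : ℝ)) ∨
              -- (b)
              (∃ H : Subgroup ((ZMod q)ˣ), H.index = 2 ∧
                ∃ a₁ ∈ A₁, ∃ a₂ ∈ A₂, ∃ a₃ ∈ A₃,
                  ((A₁.card : ℝ) - ε / 2 * (Nat.totient q : ℝ) ≤
                      ((A₁.filter fun x => a₁⁻¹ * x ∈ H).card : ℝ)) ∧
                  ((A₂.card : ℝ) - ε / 2 * (Nat.totient q : ℝ) ≤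
                      ((A₂.filter fun x => a₂⁻¹ * x ∈ H).card : ℝ)) ∧
                  ((A₃.card : ℝ) - ε / 2 * (Nat.totient q : ℝ) ≤
                      ((A₃.filter fun x => a₃⁻¹ * x ∈ H).card : ℝ)) ∧
                  ∀ a : (ZMod q)ˣ, (a₁ * a₂ * a₃)⁻¹ * a ∈ H →
                    (1 / 25 : ℝ) * (Nat.totient q : ℝ) ^ 2 ≤ (conv3 q A₁ A₂ A₃ a : ℝ)) := by
  refine ⟨1 / 100, by norm_num, fun ε hε hε' => ⟨1, fun q hq A₁ A₂ A₃ h₁ h₂ h₃ => ?_⟩⟩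
  have : NeZero q := ⟨by omega⟩
  have hφ : (Nat.totient q : ℝ) = Fintype.card (ZMod q)ˣ := by rw [ZMod.card_units_eq_totient]
  rw [hφ] at h₁ h₂ h₃ ⊢
  simp only [conv3_eq_triples]
  refine or_iff_not_imp_left.2 fun h => ?_
  push Not at h
  obtain ⟨a, ha⟩ := h
  obtain ⟨H, hH, a₁, ha₁, a₂, ha₂, a₃, ha₃, e₁, e₂, e₃, hfin⟩ :=
    structure_of_few_triples A₁ A₂ A₃ a ε hε hε' h₁ h₂ h₃ ha
  refine ⟨H, hH, a₁, ha₁, a₂, ha₂, a₃, ha₃, ?_, ?_, ?_, hfin⟩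
  · convert e₁
  · convert e₂
  · convert e₃
end
end
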